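/- arXiv:1907.05658 — 6 statements merged into one kernel-verified Lean document; each statement's English description precedes it below -/
import Mathlib

section
/- Let s ∈ ℕ, let λ_1, …, λ_s ∈ ℂ be pairwise distinct modulo 2πi (i.e. λ_j − λ_m ∉ 2πi·ℤ for j ≠ m), let d_1, …, d_s ∈ ℕ₀, and let π_{j,k} : ℝ → ℂ (1 ≤ j ≤ s, 0 ≤ k ≤ d_j) be 1-periodic functions. If the function f(t) = Σ_{j=1}^s e^{λ_j t} Σ_{k=0}^{d_j} π_{j,k}(t)·t^k is analytic on ℝ, then every function π_{j,k} is analytic on ℝ. -/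
/-!
The unit shift `S g t = g (t + 1)` preserves the space `A` of analytic functions, hence acts on the
quotient of all functions `ℝ → ℂ` by `A`. The `j`-th summand of `f` is a generalized eigenvector of
`S` for the eigenvalue `exp (λ_j)`, and these eigenvalues are distinct. Generalized eigenspaces of
the operator induced on the quotient are independent, so as soon as the sum vanishes modulo `A`,
each summand does. Dividing by `exp (λ_j t)` leaves a sum `∑ π_k(t) t ^ k` with periodic
coefficients. Forward differences treat these coefficients as constants, so the `d`-th
difference of a sum with top exponent `d` is `d! π_d`, and the coefficients are recovered from the
top down.
-/

open Finset
open scoped fwdDiff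

section FwdDiff

variable {M N G : Type*} [AddCommMonoid M] [AddCommMonoid N] [AddCommGroup G]

theorem fwdDiff_iter_comp_addMonoidHom (φ : M →+ N) (h : M) (g : N → G) (n : ℕ) :
    Δ_[h] ^[n] (g ∘ φ) = Δ_[φ h] ^[n] g ∘ φ := by
  induction n generalizing g with
  | zero => rfl
  | succ n ih =>
    have hstep : Δ_[h] (g ∘ φ) = Δ_[φ h] g ∘ φ := by
      funext t
      simp [fwdDiff]
    rw [Function.iterate_succ_apply, hstep, ih, Function.iterate_succ_apply]

theorem fwdDiff_iter_periodic_mul {R : Type*} [NonUnitalNonAssocRing R] {h : M} {p : M → R}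
    (hp : Function.Periodic p h) (g : M → R) (n : ℕ) :
    Δ_[h] ^[n] (p * g) = p * Δ_[h] ^[n] g := by
  induction n generalizing g with
  | zero => rfl
  | succ n ih =>
    have hstep : Δ_[h] (p * g) = p * Δ_[h] g := by
      funext t
      simp [fwdDiff, hp t, mul_sub]
    rw [Function.iterate_succ_apply, hstep, ih, Function.iterate_succ_apply]

variable {R : Type*} [CommRing R] {φ : M →+ R} {h : M} {p : ℕ → M → R} {n : ℕ}

theorem fwdDiff_iter_sum_periodic_mul_pow_eq_zero (hφ : φ h = 1)
    (hp : ∀ k < n, Function.Periodic (p k) h) :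
    Δ_[h] ^[n] (∑ k ∈ range n, p k * ⇑φ ^ k) = 0 := by
  rw [fwdDiff_iter_finsetSum]
  refine sum_eq_zero fun k hk => ?_
  have hpow : Δ_[h] ^[n] (⇑φ ^ k) = 0 := by
    change Δ_[h] ^[n] ((fun r : R => r ^ k) ∘ φ) = 0
    rw [fwdDiff_iter_comp_addMonoidHom, hφ, fwdDiff_iter_pow_eq_zero_of_lt (mem_range.mp hk)]
    rfl
  rw [fwdDiff_iter_periodic_mul (hp k (mem_range.mp hk)), hpow, mul_zero]

theorem fwdDiff_iter_sum_periodic_mul_pow_eq_factorial (hφ : φ h = 1)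
    (hp : ∀ k ≤ n, Function.Periodic (p k) h) :
    Δ_[h] ^[n] (∑ k ∈ range (n + 1), p k * ⇑φ ^ k) = n.factorial • p n := by
  have hpow : Δ_[h] ^[n] (⇑φ ^ n) = (n.factorial : M → R) := by
    change Δ_[h] ^[n] ((fun r : R => r ^ n) ∘ φ) = _
    rw [fwdDiff_iter_comp_addMonoidHom, hφ, fwdDiff_iter_eq_factorial]
    rfl
  rw [sum_range_succ, fwdDiff_iter_add,
    fwdDiff_iter_sum_periodic_mul_pow_eq_zero hφ fun k hk => hp k hk.le, zero_add,
    fwdDiff_iter_periodic_mul (hp n le_rfl), hpow, nsmul_eq_mul, mul_comm]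

end FwdDiff

theorem fwdDiff_iter_mem_of_shift_mem {M G S : Type*} [AddCommMonoid M] [AddCommGroup G]
    [SetLike S (M → G)] [AddSubgroupClass S (M → G)] {A : S} {h : M}
    (hA : ∀ g ∈ A, (fun t => g (t + h)) ∈ A) {g : M → G} (hg : g ∈ A) (n : ℕ) :
    Δ_[h] ^[n] g ∈ A := by
  induction n with
  | zero => exact hg
  | succ n ih =>
    rw [Function.iterate_succ_apply']
    exact sub_mem (hA _ ih) ih

theorem periodic_coeff_mem_of_sum_mul_pow_mem {M K : Type*} [AddCommMonoid M] [Field K]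
    [CharZero K] {A : Subalgebra K (M → K)} {h : M}
    (hA : ∀ g ∈ A, (fun t => g (t + h)) ∈ A) {φ : M →+ K} (hφ : φ h = 1) (hφA : ⇑φ ∈ A)
    {p : ℕ → M → K} {n : ℕ} (hp : ∀ k < n, Function.Periodic (p k) h)
    (hsum : ∑ k ∈ range n, p k * ⇑φ ^ k ∈ A) : ∀ k < n, p k ∈ A := by
  induction n with
  | zero => exact fun k hk => absurd hk k.not_lt_zero
  | succ n ih =>
    have htop : p n ∈ A := by
      have hdiff := fwdDiff_iter_mem_of_shift_mem hA hsum n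
      rw [fwdDiff_iter_sum_periodic_mul_pow_eq_factorial hφ fun k hk => hp k (by lia),
        ← Nat.cast_smul_eq_nsmul K] at hdiff
      exact (A.toSubmodule.smul_mem_iff (Nat.cast_ne_zero.mpr n.factorial_ne_zero)).mp hdiff
    have hlower : ∑ k ∈ range n, p k * ⇑φ ^ k ∈ A := by
      rw [sum_range_succ] at hsum
      exact (add_mem_cancel_right (mul_mem htop (pow_mem hφA n))).mp hsum
    intro k hk
    rcases Nat.lt_succ_iff_lt_or_eq.mp hk with hk | rfl
    · exact ih (fun k hk => hp k (by lia)) hlower k hk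
    · exact htop

theorem mem_of_sum_mem_of_mem_maxGenEigenspace {K V ι : Type*} [Field K] [AddCommGroup V]
    [Module K V] {T : Module.End K V} {W : Submodule K V} (hW : W ≤ W.comap T) {μ : ι → K}
    (hμ : Function.Injective μ) {s : Finset ι} {v : ι → V}
    (hv : ∀ i ∈ s, v i ∈ T.maxGenEigenspace (μ i)) (hsum : ∑ i ∈ s, v i ∈ W) :
    ∀ i ∈ s, v i ∈ W := by
  let T' : Module.End K (V ⧸ W) := W.mapQ W T hW
  have hcomm (c : K) :
      (T' - c • 1 : Module.End K (V ⧸ W)) ∘ₗ W.mkQ = W.mkQ ∘ₗ (T - c • 1 : Module.End K V) := rfl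
  have hv' : ∀ i ∈ s, W.mkQ (v i) ∈ T'.maxGenEigenspace (μ i) := by
    intro i hi
    obtain ⟨k, hk⟩ := (T.mem_maxGenEigenspace _ _).mp (hv i hi)
    refine (T'.mem_maxGenEigenspace _ _).mpr ⟨k, ?_⟩
    have hpow := LinearMap.congr_fun (Module.End.commute_pow_left_of_commute (hcomm (μ i)) k) (v i)
    simpa only [LinearMap.comp_apply, hk, map_zero] using hpow
  have hind := (iSupIndep_iff_finsetSum_eq_zero_imp_eq_zero _).mp
    (T'.independent_maxGenEigenspace.comp hμ)
  have hsum' : ∑ i ∈ s, W.mkQ (v i) = 0 := by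
    rw [← map_sum]
    exact (Submodule.Quotient.mk_eq_zero W).mpr hsum
  exact fun i hi => (Submodule.Quotient.mk_eq_zero W).mp (hind s _ hv' hsum' i hi)

section Shift

variable {M R : Type*} [AddCommMonoid M] [CommRing R] {h : M} {e : M → R} {μ : R}

theorem funLeft_sub_smul_one_pow_apply_mul (he : ∀ t, e (t + h) = μ * e t) (g : M → R) (n : ℕ) :
    ((LinearMap.funLeft R R (· + h) - μ • 1 : Module.End R (M → R)) ^ n) (e * g) =
      μ ^ n • (e * Δ_[h] ^[n] g) := by
  induction n generalizing g with
  | zero => simp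
  | succ n ih =>
    have hstep : (LinearMap.funLeft R R (· + h) - μ • 1 : Module.End R (M → R)) (e * g) =
        μ • (e * Δ_[h] g) := by
      funext t
      simp only [LinearMap.sub_apply, LinearMap.smul_apply, Module.End.one_apply, Pi.sub_apply,
        LinearMap.funLeft_apply, Pi.mul_apply, he t, Pi.smul_apply, smul_eq_mul, fwdDiff]
      ring
    rw [pow_succ, Module.End.mul_apply, hstep, map_smul, ih, smul_smul, ← pow_succ',
      Function.iterate_succ_apply]

theorem mul_sum_periodic_mul_pow_mem_maxGenEigenspace_funLeft (he : ∀ t, e (t + h) = μ * e t)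
    {φ : M →+ R} (hφ : φ h = 1) {p : ℕ → M → R} {n : ℕ}
    (hp : ∀ k < n, Function.Periodic (p k) h) :
    e * ∑ k ∈ range n, p k * ⇑φ ^ k ∈
      Module.End.maxGenEigenspace (LinearMap.funLeft R R (· + h)) μ := by
  refine (Module.End.mem_maxGenEigenspace _ _ _).mpr ⟨n, ?_⟩
  rw [funLeft_sub_smul_one_pow_apply_mul he, fwdDiff_iter_sum_periodic_mul_pow_eq_zero hφ hp,
    mul_zero, smul_zero]

end Shift

theorem injective_exp_of_sub_ne_two_pi_I_mul_int {ι : Type*} {lam : ι → ℂ}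
    (hlam : ∀ j m, j ≠ m → ∀ n : ℤ, lam j - lam m ≠ 2 * Real.pi * Complex.I * n) :
    Function.Injective fun j => Complex.exp (lam j) := by
  intro j m hjm
  by_contra hne
  obtain ⟨n, hn⟩ := Complex.exp_eq_exp_iff_exists_int.mp hjm
  exact hlam j m hne n (by rw [hn]; ring)

theorem stmt_2_general {ι : Type*} [Fintype ι] (A : Subalgebra ℂ (ℝ → ℂ))
    (hshift : ∀ g ∈ A, (fun t => g (t + 1)) ∈ A) (hid : (fun t : ℝ => (t : ℂ)) ∈ A)
    (lam : ι → ℂ) (hexp : ∀ j, (fun t : ℝ => Complex.exp (-lam j * t)) ∈ A)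
    (hlam : ∀ j m, j ≠ m → ∀ n : ℤ, lam j - lam m ≠ 2 * Real.pi * Complex.I * n)
    (d : ι → ℕ) (π : ι → ℕ → ℝ → ℂ)
    (hper : ∀ j, ∀ k ≤ d j, Function.Periodic (π j k) 1)
    (hf : (fun t : ℝ => ∑ j, Complex.exp (lam j * t) *
        ∑ k ∈ range (d j + 1), π j k t * (t : ℂ) ^ k) ∈ A) :
    ∀ j, ∀ k ≤ d j, π j k ∈ A := by
  let φ : ℝ →+ ℂ := Complex.ofRealHom
  let e (j : ι) (t : ℝ) : ℂ := Complex.exp (lam j * t)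
  let q (j : ι) : ℝ → ℂ := ∑ k ∈ range (d j + 1), π j k * ⇑φ ^ k
  have hφ : φ 1 = 1 := Complex.ofReal_one
  have hper' (j : ι) : ∀ k < d j + 1, Function.Periodic (π j k) 1 :=
    fun k hk => hper j k (Nat.lt_succ_iff.mp hk)
  have he (j : ι) (t : ℝ) : e j (t + 1) = Complex.exp (lam j) * e j t := by
    simp only [e, ← Complex.exp_add]
    push_cast
    ring_nf
  have hsum : ∑ j, e j * q j ∈ A := by
    convert hf using 1
    funext t
    simp [e, q, φ]
  intro j
  have hsummand : e j * q j ∈ A :=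
    mem_of_sum_mem_of_mem_maxGenEigenspace (T := LinearMap.funLeft ℂ ℂ (· + 1))
      (W := A.toSubmodule) hshift
      (injective_exp_of_sub_ne_two_pi_I_mul_int hlam)
      (fun j _ => mul_sum_periodic_mul_pow_mem_maxGenEigenspace_funLeft (he j) hφ (hper' j))
      hsum j (mem_univ j)
  have hq : q j ∈ A := by
    convert mul_mem (hexp j) hsummand using 1
    funext t
    simp [e, ← mul_assoc, ← Complex.exp_add]
  exact fun k hk =>
    periodic_coeff_mem_of_sum_mul_pow_mem hshift hφ hid (hper' j) hq k (Nat.lt_succ_iff.mpr hk)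

/-- The algebra of complex-valued functions that are real-analytic on the whole line. -/
def realAnalyticSubalgebra : Subalgebra ℂ (ℝ → ℂ) where
  carrier := {g | ∀ x, AnalyticAt ℝ g x}
  mul_mem' hf hg x := (hf x).mul (hg x)
  add_mem' hf hg x := (hf x).add (hg x)
  algebraMap_mem' _ _ := analyticAt_const

theorem shift_mem_realAnalyticSubalgebra {g : ℝ → ℂ} (hg : g ∈ realAnalyticSubalgebra) (a : ℝ) :
    (fun t => g (t + a)) ∈ realAnalyticSubalgebra :=
  fun x => (hg (x + a)).fun_comp (f := (· + a)) (analyticAt_id.add analyticAt_const)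

theorem ofReal_mem_realAnalyticSubalgebra : (fun t : ℝ => (t : ℂ)) ∈ realAnalyticSubalgebra :=
  Complex.ofRealCLM.analyticAt

theorem exp_mul_mem_realAnalyticSubalgebra (c : ℂ) :
    (fun t : ℝ => Complex.exp (c * t)) ∈ realAnalyticSubalgebra :=
  fun x => analyticAt_cexp.restrictScalars.fun_comp (f := fun t : ℝ => c * (t : ℂ))
    (analyticAt_const.mul (ofReal_mem_realAnalyticSubalgebra x))

/-- If `f(t) = Σ_{j=1}^s e^{λ_j t} Σ_{k=0}^{d_j} π_{j,k}(t)·t^k` is analytic on ℝ,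
where the `λ_j` are pairwise distinct modulo `2πi` and the `π_{j,k}` are 1-periodic, then every
`π_{j,k}` is analytic on ℝ. -/
theorem stmt_2 (s : ℕ) (lam : Fin s → ℂ)
    (hlam : ∀ j m : Fin s, j ≠ m → ∀ n : ℤ, lam j - lam m ≠ 2 * Real.pi * Complex.I * n)
    (d : Fin s → ℕ) (π : Fin s → ℕ → ℝ → ℂ)
    (hper : ∀ j : Fin s, ∀ k ≤ d j, ∀ t : ℝ, π j k (t + 1) = π j k t)
    (f : ℝ → ℂ)
    (hfdef : ∀ t : ℝ, f t = ∑ j : Fin s, Complex.exp (lam j * (t : ℂ)) *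
        ∑ k ∈ Finset.range (d j + 1), π j k t * (t : ℂ) ^ k)
    (hf : ∀ x : ℝ, AnalyticAt ℝ f x) :
    ∀ j : Fin s, ∀ k ≤ d j, ∀ x : ℝ, AnalyticAt ℝ (π j k) x :=
  stmt_2_general realAnalyticSubalgebra (fun _ hg => shift_mem_realAnalyticSubalgebra hg 1)
    ofReal_mem_realAnalyticSubalgebra lam (fun j => exp_mul_mem_realAnalyticSubalgebra (-lam j))
    hlam d π hper (funext hfdef ▸ hf)
end

section
/- Let s ∈ ℕ, let λ_1, …, λ_s ∈ ℂ be pairwise distinct modulo 2πi, let d_1, …, d_s ∈ ℕ₀, and let π_{j,k} : ℝ → ℂ (1 ≤ j ≤ s, 0 ≤ k ≤ d_j) be 1-periodic functions such that f(t) = Σ_{j=1}^s e^{λ_j t} Σ_{k=0}^{d_j} π_{j,k}(t)·t^k is analytic on ℝ. Then for each j ∈ {1, …, s} there exist polynomials p_{j,0}, …, p_{j,d_j} with deg(p_{j,k}) = k such that the (analytic) function g_j(t) = e^{λ_j t} Σ_{k=0}^{d_j} p_{j,k}(t)·π_{j,k}(t) is a finite ℂ-linear combination of the integer shifts f(·+m),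 m ∈ ℤ, of f. -/
/-!
On `e^{λt} p(t) π(t)` with `π` 1-periodic, translation by `1` acts only on the polynomial factor,
as `T_λ p = e^λ p(· + 1)`. Since `T_λ - e^λ` lowers degrees, a polynomial `q` in `T_λ` annihilates
all `p` with `deg p ≤ d` if `(X - e^λ)^(d+1)` divides `q`, and it preserves degrees if
`q(e^λ) ≠ 0`. The polynomial `q = ∏_{l ≠ j} (X - e^{λ_l})^(d_l + 1)` in the translation
therefore kills every term of `f` except the `j`-th one.
-/

open Polynomial

section PolynomialOperator

/-- The operator `p ↦ a • p(X + r)` on polynomials: it is what translation by `r` does to the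
polynomial factor of `w(t) p(t)` when `w(t + r) = a w(t)`. -/
noncomputable def scaledTaylor {R : Type*} [CommSemiring R] (a r : R) : Module.End R R[X] :=
  a • taylor r

theorem scaledTaylor_apply {R : Type*} [CommSemiring R] (a r : R) (p : R[X]) :
    scaledTaylor a r p = a • taylor r p := rfl

theorem degree_aeval_scaledTaylor_le {R : Type*} [CommSemiring R] (a r : R) (q p : R[X]) :
    (aeval (scaledTaylor a r) q p).degree ≤ p.degree := by
  refine mem_degreeLE.1 (aeval_apply_smul_mem_of_le_comap (mem_degreeLE.2 le_rfl) q _ fun x hx ↦ ?_)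
  rw [Submodule.mem_comap, mem_degreeLE, scaledTaylor_apply]
  exact (degree_smul_le _ _).trans ((degree_taylor _ _).trans_le (mem_degreeLE.1 hx))

variable {R : Type*} [CommRing R] (a r : R)

theorem degree_taylor_sub_lt {p : R[X]} (hp : p ≠ 0) : (taylor r p - p).degree < p.degree := by
  rw [← degree_taylor p r]
  exact degree_sub_lt_left (degree_taylor p r) (by rwa [ne_eq, taylor_eq_zero])
    (leadingCoeff_taylor r p)

theorem aeval_scaledTaylor_X_sub_C_apply (p : R[X]) :
    aeval (scaledTaylor a r) (X - C a) p = a • (taylor r p - p) := by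
  simp [scaledTaylor_apply, smul_sub]

theorem degree_aeval_scaledTaylor_X_sub_C_lt {p : R[X]} (hp : p ≠ 0) :
    (aeval (scaledTaylor a r) (X - C a) p).degree < p.degree := by
  rw [aeval_scaledTaylor_X_sub_C_apply]
  exact (degree_smul_le _ _).trans_lt (degree_taylor_sub_lt r hp)

theorem aeval_scaledTaylor_X_sub_C_pow_eq_zero {n : ℕ} {p : R[X]} (hp : p.degree < n) :
    aeval (scaledTaylor a r) ((X - C a) ^ n) p = 0 := by
  induction n generalizing p with
  | zero => simpa using hp
  | succ n ih =>
    rw [pow_succ, map_mul, Module.End.mul_apply]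
    obtain rfl | hp₀ := eq_or_ne p 0
    · simp only [map_zero]
    · have degree_le : p.degree ≤ n := natDegree_le_iff_degree_le.1
        (Nat.le_of_lt_succ ((natDegree_lt_iff_degree_lt hp₀).2 hp))
      exact ih ((degree_aeval_scaledTaylor_X_sub_C_lt a r hp₀).trans_le degree_le)

theorem aeval_scaledTaylor_eq_zero {n : ℕ} {q p : R[X]} (hq : (X - C a) ^ n ∣ q)
    (hp : p.degree < n) : aeval (scaledTaylor a r) q p = 0 := by
  obtain ⟨u, rfl⟩ := hq
  rw [mul_comm, map_mul, Module.End.mul_apply, aeval_scaledTaylor_X_sub_C_pow_eq_zero a r hp,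
    map_zero]

theorem degree_aeval_scaledTaylor [NoZeroDivisors R] {q : R[X]} (hq : q.eval a ≠ 0) (p : R[X]) :
    (aeval (scaledTaylor a r) q p).degree = p.degree := by
  obtain rfl | hp := eq_or_ne p 0
  · rw [map_zero]
  obtain ⟨u, hu⟩ := X_sub_C_dvd_sub_C_eval (a := a) (p := q)
  have decomposition : aeval (scaledTaylor a r) q p =
      aeval (scaledTaylor a r) u (aeval (scaledTaylor a r) (X - C a) p) + C (q.eval a) * p := by
    rw [← Module.End.mul_apply, ← map_mul, mul_comm u, ← hu]
    simp [smul_eq_C_mul]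
  have leading : (C (q.eval a) * p).degree = p.degree := degree_C_mul hq
  rw [decomposition, degree_add_eq_right_of_degree_lt, leading]
  rw [leading]
  exact (degree_aeval_scaledTaylor_le a r u _).trans_lt
    (degree_aeval_scaledTaylor_X_sub_C_lt a r hp)

end PolynomialOperator

theorem aeval_comp_eq_comp_aeval {R M N : Type*} [CommSemiring R] [AddCommMonoid M] [Module R M]
    [AddCommMonoid N] [Module R N] {S : Module.End R N} {T : Module.End R M} {φ : M →ₗ[R] N}
    (h : S ∘ₗ φ = φ ∘ₗ T) (q : R[X]) : aeval S q ∘ₗ φ = φ ∘ₗ aeval T q := by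
  induction q using Polynomial.induction_on' with
  | add p q hp hq => rw [map_add, map_add, LinearMap.add_comp, LinearMap.comp_add, hp, hq]
  | monomial n c =>
    simp only [aeval_monomial, ← Algebra.smul_def, LinearMap.smul_comp, LinearMap.comp_smul,
      Module.End.commute_pow_left_of_commute h n]

section Translation

/-- The operator `f ↦ f(· + h)` on functions, linear over the scalars `K`, so that polynomials in
it are the linear combinations of the shifts of `f` by multiples of `h`. -/
def translation (K : Type*) {G : Type*} [CommSemiring K] [Add G] (h : G) : Module.End K (G → K) :=
  LinearMap.funLeft K K (· + h)

theorem translation_apply {K G : Type*} [CommSemiring K] [Add G] (h : G) (f : G → K) (t : G) :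
    translation K h f t = f (t + h) := rfl

theorem translation_pow_apply {K G : Type*} [CommSemiring K] [AddMonoid G] (h : G) (n : ℕ)
    (f : G → K) (t : G) : (translation K h ^ n) f t = f (t + n • h) := by
  induction n generalizing t with
  | zero => simp
  | succ n ih =>
    rw [pow_succ', Module.End.mul_apply, translation_apply, ih, add_assoc, succ_nsmul']

theorem aeval_translation_apply {K G : Type*} [CommSemiring K] [AddMonoid G] (h : G) (q : K[X])
    (f : G → K) (t : G) :
    aeval (translation K h) q f t = ∑ n ∈ q.support, q.coeff n * f (t + n • h) := by
  simp [aeval_def, eval₂_eq_sum, sum_def, translation_pow_apply]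

variable {R K : Type*} [CommSemiring R] [CommSemiring K] [Algebra R K]

/-- The function `t ↦ w(t) p(t)`, as a linear function of the polynomial `p`. -/
noncomputable def weightedEval (w : R → K) : K[X] →ₗ[K] (R → K) :=
  LinearMap.pi fun t ↦ w t • leval (algebraMap R K t)

theorem weightedEval_apply (w : R → K) (p : K[X]) (t : R) :
    weightedEval w p t = w t * p.eval (algebraMap R K t) := rfl

theorem translation_comp_weightedEval {h : R} {a : K} {w : R → K}
    (hw : ∀ t, w (t + h) = a * w t) :
    translation K h ∘ₗ weightedEval w =
      weightedEval w ∘ₗ scaledTaylor a (algebraMap R K h) := by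
  refine LinearMap.ext fun p ↦ funext fun t ↦ ?_
  simp only [LinearMap.comp_apply, translation_apply, weightedEval_apply,
    scaledTaylor_apply, hw, map_add, eval_smul, taylor_eval, smul_eq_mul]
  ring

theorem aeval_translation_weightedEval {h : R} {a : K} {w : R → K}
    (hw : ∀ t, w (t + h) = a * w t) (q p : K[X]) :
    aeval (translation K h) q (weightedEval w p) =
      weightedEval w (aeval (scaledTaylor a (algebraMap R K h)) q p) :=
  LinearMap.congr_fun (aeval_comp_eq_comp_aeval (translation_comp_weightedEval hw) q) p

end Translation

section Isolation

variable {ι K : Type*} [Fintype ι] [DecidableEq ι] [CommRing K]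

/-- The polynomial `∏_{l ≠ j} (X - μ_l)^(d_l + 1)`: applied to a translation, it isolates the
`j`-th term of a sum whose `l`-th term has multiplier `μ_l` and degree at most `d_l`. -/
noncomputable def isolatingPolynomial (μ : ι → K) (d : ι → ℕ) (j : ι) : K[X] :=
  ∏ l ∈ Finset.univ.erase j, (X - C (μ l)) ^ (d l + 1)

theorem X_sub_C_pow_dvd_isolatingPolynomial (μ : ι → K) (d : ι → ℕ) {j l : ι} (hl : l ≠ j) :
    (X - C (μ l)) ^ (d l + 1) ∣ isolatingPolynomial μ d j :=
  Finset.dvd_prod_of_mem (fun l ↦ (X - C (μ l)) ^ (d l + 1))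
    (Finset.mem_erase.2 ⟨hl, Finset.mem_univ l⟩)

theorem eval_isolatingPolynomial_ne_zero [IsDomain K] {μ : ι → K} (hμ : Function.Injective μ)
    (d : ι → ℕ) (j : ι) : (isolatingPolynomial μ d j).eval (μ j) ≠ 0 := by
  rw [isolatingPolynomial, eval_prod, Finset.prod_ne_zero_iff]
  intro l hl
  rw [eval_pow, eval_sub, eval_X, eval_C]
  exact pow_ne_zero _ (sub_ne_zero.2 (hμ.ne (Finset.ne_of_mem_erase hl).symm))

theorem aeval_translation_isolatingPolynomial {R : Type*} [CommSemiring R] [Algebra R K] {h : R}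
    {μ : ι → K} {d : ι → ℕ} {w : ι → ℕ → R → K}
    (hw : ∀ l, ∀ k ≤ d l, ∀ t, w l k (t + h) = μ l * w l k t) (j : ι) :
    aeval (translation K h) (isolatingPolynomial μ d j)
        (∑ l, ∑ k ∈ Finset.range (d l + 1), weightedEval (w l k) (X ^ k)) =
      ∑ k ∈ Finset.range (d j + 1), weightedEval (w j k)
        (aeval (scaledTaylor (μ j) (algebraMap R K h)) (isolatingPolynomial μ d j) (X ^ k)) := by
  have act : ∀ l, ∀ k ∈ Finset.range (d l + 1),
      aeval (translation K h) (isolatingPolynomial μ d j) (weightedEval (w l k) (X ^ k)) =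
        weightedEval (w l k) (aeval (scaledTaylor (μ l) (algebraMap R K h))
          (isolatingPolynomial μ d j) (X ^ k)) := fun l k hk ↦
    aeval_translation_weightedEval (hw l k (Finset.mem_range_succ_iff.1 hk)) _ _
  simp only [map_sum]
  rw [Fintype.sum_eq_single j, Finset.sum_congr rfl (act j)]
  intro l hl
  refine Finset.sum_eq_zero fun k hk ↦ ?_
  have degree_lt : (X ^ k : K[X]).degree < (d l + 1 : ℕ) :=
    (degree_X_pow_le k).trans_lt (Nat.cast_lt.2 (Finset.mem_range.1 hk))
  rw [act l k hk, aeval_scaledTaylor_eq_zero (μ l) (algebraMap R K h)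
    (X_sub_C_pow_dvd_isolatingPolynomial μ d hl) degree_lt, map_zero]

end Isolation

theorem exp_injective_of_sub_ne_two_pi_I_mul_int {ι : Type*} {lam : ι → ℂ}
    (hlam : ∀ j m, j ≠ m → ∀ n : ℤ, lam j - lam m ≠ 2 * Real.pi * Complex.I * n) :
    Function.Injective fun j ↦ Complex.exp (lam j) := by
  intro j m hjm
  by_contra hne
  obtain ⟨n, hn⟩ := Complex.exp_eq_exp_iff_exists_int.1 hjm
  exact hlam j m hne n (by rw [hn]; ring)

theorem exp_mul_periodic_add_one (z : ℂ) {φ : ℝ → ℂ} (hφ : Function.Periodic φ 1) (t : ℝ) :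
    Complex.exp (z * (t + 1 : ℝ)) * φ (t + 1) = Complex.exp z * (Complex.exp (z * t) * φ t) := by
  rw [hφ t, ← mul_assoc, ← Complex.exp_add]
  congr 2
  push_cast
  ring

theorem stmt_3_general {ι : Type*} [Fintype ι] {lam : ι → ℂ}
    (hlam : ∀ j m : ι, j ≠ m → ∀ n : ℤ, lam j - lam m ≠ 2 * Real.pi * Complex.I * n)
    {d : ι → ℕ} {π : ι → ℕ → ℝ → ℂ}
    (hper : ∀ j : ι, ∀ k ≤ d j, ∀ t : ℝ, π j k (t + 1) = π j k t)
    {f : ℝ → ℂ}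
    (hfdef : ∀ t : ℝ, f t = ∑ j : ι, Complex.exp (lam j * (t : ℂ)) *
        ∑ k ∈ Finset.range (d j + 1), π j k t * (t : ℂ) ^ k) (j : ι) :
    ∃ p : ℕ → ℂ[X], (∀ k, (p k).degree = k) ∧
      ∃ (S : Finset ℕ) (c : ℕ → ℂ), ∀ t : ℝ,
        Complex.exp (lam j * (t : ℂ)) *
            ∑ k ∈ Finset.range (d j + 1), (p k).eval (t : ℂ) * π j k t
          = ∑ m ∈ S, c m * f (t + m) := by
  classical
  let μ : ι → ℂ := fun l ↦ Complex.exp (lam l)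
  let w : ι → ℕ → ℝ → ℂ := fun l k t ↦ Complex.exp (lam l * t) * π l k t
  let q := isolatingPolynomial μ d j
  have hq : q.eval (μ j) ≠ 0 :=
    eval_isolatingPolynomial_ne_zero (exp_injective_of_sub_ne_two_pi_I_mul_int hlam) d j
  have hf : f = ∑ l, ∑ k ∈ Finset.range (d l + 1), weightedEval (w l k) (X ^ k) := by
    ext t
    simp [hfdef, weightedEval_apply, w, Finset.mul_sum, mul_assoc]
  have isolated := aeval_translation_isolatingPolynomial (h := (1 : ℝ)) (μ := μ) (w := w)
    (fun l k hk ↦ exp_mul_periodic_add_one (lam l) (hper l k hk)) j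
  rw [← hf] at isolated
  refine ⟨fun k ↦ aeval (scaledTaylor (μ j) (algebraMap ℝ ℂ 1)) q (X ^ k), fun k ↦ ?_,
    q.support, q.coeff, fun t ↦ ?_⟩
  · rw [degree_aeval_scaledTaylor _ _ hq, degree_X_pow]
  · calc
      _ = (∑ k ∈ Finset.range (d j + 1), weightedEval (w j k)
            (aeval (scaledTaylor (μ j) (algebraMap ℝ ℂ 1)) q (X ^ k))) t := by
        simp only [Finset.sum_apply, weightedEval_apply, w, Finset.mul_sum, Complex.coe_algebraMap,
          mul_assoc, mul_comm (π j _ t)]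
      _ = aeval (translation ℂ (1 : ℝ)) q f t := congrFun isolated.symm t
      _ = ∑ m ∈ q.support, q.coeff m * f (t + m) := by
        simp only [aeval_translation_apply, nsmul_one]

/-- If `f(t) = Σ_{j=1}^s e^{λ_j t} Σ_{k=0}^{d_j} π_{j,k}(t)·t^k` is analytic on ℝ,
with `λ_j` pairwise distinct modulo `2πi` and `π_{j,k}` 1-periodic, then for each `j` there
exist polynomials `p_{j,k}` with `deg p_{j,k} = k` such that
`g_j(t) = e^{λ_j t} Σ_{k=0}^{d_j} p_{j,k}(t)·π_{j,k}(t)` is a finite ℂ-linear combination of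
the integer shifts `f(·+m)`, `m ∈ ℤ`, of `f`. -/
theorem stmt_3 (s : ℕ) (lam : Fin s → ℂ)
    (hlam : ∀ j m : Fin s, j ≠ m → ∀ n : ℤ, lam j - lam m ≠ 2 * Real.pi * Complex.I * n)
    (d : Fin s → ℕ) (π : Fin s → ℕ → ℝ → ℂ)
    (hper : ∀ j : Fin s, ∀ k ≤ d j, ∀ t : ℝ, π j k (t + 1) = π j k t)
    (f : ℝ → ℂ)
    (hfdef : ∀ t : ℝ, f t = ∑ j : Fin s, Complex.exp (lam j * (t : ℂ)) *
        ∑ k ∈ Finset.range (d j + 1), π j k t * (t : ℂ) ^ k)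
    (hf : ∀ x : ℝ, AnalyticAt ℝ f x) :
    ∀ j : Fin s, ∃ p : ℕ → Polynomial ℂ, (∀ k ≤ d j, (p k).degree = k) ∧
      ∃ (S : Finset ℤ) (c : ℤ → ℂ), ∀ t : ℝ,
        Complex.exp (lam j * (t : ℂ)) *
            ∑ k ∈ Finset.range (d j + 1), (p k).eval (t : ℂ) * π j k t
          = ∑ m ∈ S, c m * f (t + m) := by
  intro j
  obtain ⟨p, hp, S, c, h⟩ := stmt_3_general hlam hper hfdef j
  exact ⟨p, fun k _ ↦ hp k, S.map Nat.castEmbedding, fun m ↦ c m.toNat, by simpa using h⟩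
end

section
/- Let φ_1, …, φ_n : ℝ → ℂ be compactly supported functions and let f be an analytic function belonging to the shift-invariant space V_Φ generated by φ_1, …, φ_n. Then there exist N ∈ ℕ and coefficients a_0, …, a_N ∈ ℂ, not all zero, such that Σ_{ℓ=0}^N a_ℓ · f(t+ℓ) = 0 for all t ∈ ℝ. -/
/-!
On a compact neighbourhood `s` only finitely many translates of the generators are nonzero, so the
functions of `V_Φ` restrict to a finite-dimensional space of functions on `s`. By the identity
principle, restriction to `s` is injective on analytic functions. Hence the analytic functions in
`V_Φ` form a finite-dimensional space, and as `V_Φ` is invariant under shifts, infinitely many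
shifts of such a function are always linearly dependent.
-/

open Filter Set Submodule
open scoped Pointwise Topology

theorem exists_sum_range_succ_smul_eq_zero_of_not_linearIndependent {R M : Type*} [Ring R]
    [AddCommGroup M] [Module R M] {v : ℕ → M} (hv : ¬ LinearIndependent R v) :
    ∃ (N : ℕ) (a : ℕ → R), (∃ ℓ ≤ N, a ℓ ≠ 0) ∧ ∑ ℓ ∈ Finset.range (N + 1), a ℓ • v ℓ = 0 := by
  simp only [linearIndependent_iff, not_forall] at hv
  obtain ⟨a, hsum, ha⟩ := hv
  obtain ⟨ℓ, hℓ⟩ := Finsupp.ne_iff.1 ha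
  have hle : ∀ m ∈ a.support, m ≤ a.support.sup id := fun m hm => Finset.le_sup (f := id) hm
  refine ⟨a.support.sup id, a, ⟨ℓ, hle ℓ (Finsupp.mem_support_iff.2 hℓ), hℓ⟩, ?_⟩
  rw [← hsum, Finsupp.linearCombination_apply, Finsupp.sum_of_support_subset]
  · exact fun m hm => Finset.mem_range_succ_iff.2 (hle m hm)
  · simp

theorem finite_setOf_exists_mem_apply_sub_ne_zero {D E G : Type*} [AddCommGroup D]
    [TopologicalSpace D] [IsTopologicalAddGroup D] [Zero E] {τ : G → D}
    (hτ : Tendsto τ cofinite (cocompact D)) {φ : D → E} (hφ : HasCompactSupport φ) {s : Set D}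
    (hs : IsCompact s) : {g | ∃ t ∈ s, φ (t - τ g) ≠ 0}.Finite := by
  have hcompact : IsCompact (s - tsupport φ) :=
    sub_eq_add_neg s (tsupport φ) ▸ hs.add hφ.isCompact.neg
  have hfin : (τ ⁻¹' (s - tsupport φ)).Finite := by
    simpa using hτ hcompact.compl_mem_cocompact
  refine hfin.subset fun g ⟨t, hts, hne⟩ => ?_
  exact ⟨t, hts, t - τ g, subset_tsupport φ hne, sub_sub_cancel t (τ g)⟩

section ShiftInvariantSpace

variable {R D E ι G : Type*} [Ring R] [AddCommGroup D] [AddCommGroup E] [Module R E]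
  [TopologicalSpace E] [AddGroup G] {τ : G →+ D} {φ : ι → D → E}

/-- The shift-invariant space `V_Φ` generated by the family `φ`, where the group `G` acts on the
domain `D` by the translations `t ↦ t + τ g`; the classical case is `τ : ℤ → ℝ`. The sums are
locally finite when the index type of `φ` is finite, the generators have compact support and
`τ` is proper; otherwise the junk value of `∑'` may enter. -/
def shiftInvariantSpace (R : Type*) [Ring R] [Module R E] (τ : G →+ D) (φ : ι → D → E) :
    Set (D → E) :=
  {f | ∃ c : ι → G → R, ∀ t, f t = ∑' q : ι × G, c q.1 q.2 • φ q.1 (t - τ q.2)}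

theorem comp_add_mem_shiftInvariantSpace {f : D → E} (hf : f ∈ shiftInvariantSpace R τ φ)
    (g : G) : (fun t => f (t + τ g)) ∈ shiftInvariantSpace R τ φ := by
  obtain ⟨c, hc⟩ := hf
  refine ⟨fun j h => c j (h + g), fun t => ?_⟩
  simp only [hc]
  rw [← ((Equiv.refl ι).prodCongr (Equiv.addRight g)).tsum_eq]
  simp [add_sub_add_right_eq_sub]

theorem exists_finite_forall_domRestrict_mem_span [Finite ι] [TopologicalSpace D]
    [IsTopologicalAddGroup D] (hτ : Tendsto τ cofinite (cocompact D))
    (hφ : ∀ j, HasCompactSupport (φ j)) {s : Set D} (hs : IsCompact s) :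
    ∃ w : Set (s → E), w.Finite ∧ ∀ f ∈ shiftInvariantSpace R τ φ, s.domRestrict f ∈ span R w := by
  let translate (q : ι × G) : s → E := s.domRestrict fun t => φ q.1 (t - τ q.2)
  have hfin : (⋃ j, Prod.mk j '' {g | ∃ t ∈ s, φ j (t - τ g) ≠ 0}).Finite :=
    finite_iUnion fun j => (finite_setOf_exists_mem_apply_sub_ne_zero hτ (hφ j) hs).image _
  refine ⟨translate '' hfin.toFinset, hfin.toFinset.finite_toSet.image _, ?_⟩
  rintro f ⟨c, hc⟩
  have hsum : s.domRestrict f = ∑ q ∈ hfin.toFinset, c q.1 q.2 • translate q := by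
    funext t
    rw [domRestrict_apply, hc, tsum_eq_sum (s := hfin.toFinset)]
    · simp [translate]
    · rintro ⟨j, g⟩ hq
      have hzero : φ j (t - τ g) = 0 := by
        by_contra hne
        exact hq (by simpa using ⟨t, t.2, hne⟩)
      rw [hzero, smul_zero]
  rw [hsum]
  exact sum_mem fun q hq => smul_mem _ _ (subset_span (mem_image_of_mem _ hq))

end ShiftInvariantSpace

section Analytic

variable {𝕜 R D E ι G κ : Type*} [NontriviallyNormedField 𝕜] [NormedAddCommGroup D]
  [NormedSpace 𝕜 D] [PreconnectedSpace D] [NormedAddCommGroup E] [NormedSpace 𝕜 E]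
  [NormedRing R] [Module R E] [IsBoundedSMul R E] [SMulCommClass 𝕜 R E]

theorem linearIndependent_domRestrict_of_analyticOnNhd {v : κ → D → E} (hv : LinearIndependent R v)
    (han : ∀ k, AnalyticOnNhd 𝕜 (v k) univ) {s : Set D} {x : D} (hs : s ∈ 𝓝 x) :
    LinearIndependent R fun k => s.domRestrict (v k) := by
  have hspan : ∀ f ∈ span R (range v), AnalyticOnNhd 𝕜 f univ := fun f hf => by
    induction hf using span_induction with
    | mem f hf => obtain ⟨k, rfl⟩ := hf; exact han k
    | zero => exact analyticOnNhd_const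
    | add f g _ _ hf hg => exact hf.add hg
    | smul a f _ hf => exact hf.const_smul
  refine hv.map (f := LinearMap.funLeft R E ((↑) : s → D)) (disjoint_def.2 fun f hf hker => ?_)
  refine (hspan f hf).eq_of_eventuallyEq (z₀ := x) analyticOnNhd_const ?_
  filter_upwards [hs] with t ht using congrFun (LinearMap.mem_ker.1 hker) ⟨t, ht⟩

variable [StrongRankCondition R] [WeaklyLocallyCompactSpace D] [Finite ι] [AddGroup G]
  {τ : G →+ D} {φ : ι → D → E}

theorem finite_of_linearIndependent_of_analyticOnNhd_of_mem_shiftInvariantSpace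
    (hτ : Tendsto τ cofinite (cocompact D)) (hφ : ∀ j, HasCompactSupport (φ j))
    {v : κ → D → E} (hv : LinearIndependent R v) (han : ∀ k, AnalyticOnNhd 𝕜 (v k) univ)
    (hmem : ∀ k, v k ∈ shiftInvariantSpace R τ φ) : Finite κ := by
  obtain ⟨s, hs, hs_nhds⟩ := exists_compact_mem_nhds (0 : D)
  obtain ⟨w, hw, hspan⟩ := exists_finite_forall_domRestrict_mem_span (R := R) hτ hφ hs
  have := hw.to_subtype
  exact (linearIndependent_domRestrict_of_analyticOnNhd hv han hs_nhds).finite_of_le_span_finite _ w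
    (range_subset_iff.2 fun k => hspan _ (hmem k))

theorem stmt_4_general [Infinite κ] (hτ : Tendsto τ cofinite (cocompact D))
    (hφ : ∀ j, HasCompactSupport (φ j)) {f : D → E} (hf : AnalyticOnNhd 𝕜 f univ)
    (hmem : f ∈ shiftInvariantSpace R τ φ) (u : κ → G) :
    ¬ LinearIndependent R fun k t => f (t + τ (u k)) := fun hind =>
  have han (k : κ) : AnalyticOnNhd 𝕜 (fun t => f (t + τ (u k))) univ := fun t _ =>
    (hf (t + τ (u k)) (mem_univ _)).fun_comp (f := (· + τ (u k)))
      (analyticAt_id.add analyticAt_const)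
  have := finite_of_linearIndependent_of_analyticOnNhd_of_mem_shiftInvariantSpace hτ hφ hind han
    fun k => comp_add_mem_shiftInvariantSpace hmem (u k)
  not_finite κ

end Analytic

/-- If `f` is analytic and belongs to the shift-invariant space generated by
compactly supported functions `φ_1, …, φ_n`, then some nontrivial finite linear combination of
integer shifts of `f` vanishes identically: `Σ_{ℓ=0}^N a_ℓ·f(t+ℓ) = 0` for all `t`. -/
theorem stmt_4 (n : ℕ) (φ : Fin n → ℝ → ℂ) (hsupp : ∀ j, HasCompactSupport (φ j))
    (f : ℝ → ℂ) (hf : ∀ x : ℝ, AnalyticAt ℝ f x)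
    (c : Fin n → ℤ → ℂ)
    (hmem : ∀ t : ℝ, f t = ∑' q : Fin n × ℤ, c q.1 q.2 * φ q.1 (t - (q.2 : ℝ))) :
    ∃ (N : ℕ) (a : ℕ → ℂ), (∃ ℓ ≤ N, a ℓ ≠ 0) ∧
      ∀ t : ℝ, ∑ ℓ ∈ Finset.range (N + 1), a ℓ * f (t + ℓ) = 0 := by
  have hdep : ¬ LinearIndependent ℂ fun (ℓ : ℕ) t => f (t + Int.castAddHom ℝ ℓ) :=
    stmt_4_general Int.tendsto_coe_cofinite hsupp (fun x _ => hf x) ⟨c, hmem⟩ _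
  obtain ⟨N, a, ha, hsum⟩ := exists_sum_range_succ_smul_eq_zero_of_not_linearIndependent hdep
  exact ⟨N, a, ha, fun t => by simpa using congrFun hsum t⟩
end

section
/- Let φ_1, …, φ_n : ℝ → ℂ be compactly supported functions and let H be the set of all analytic functions in the shift-invariant space V_Φ generated by φ_1, …, φ_n. Then H is a ℂ-linear subspace of the space of functions ℝ → ℂ, it is finite-dimensional, and its dimension is at most the (finite) number of pairs (j,ℓ) ∈ {1,…,n} × ℤ for which the shifted generator φ_j(·−ℓ) is not identically zero on the interval [0,1]. -/
/-!
A function that is analytic on a connected space is determined by its restriction to any set `U`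
with nonempty interior. If only finitely many generators are not identically zero on `U`, then
every function of the generated space restricts to a linear combination of the restrictions of
these finitely many generators. So restriction to `U` embeds the analytic functions of the
generated space into the span of those restrictions.
-/

open Filter Set
open scoped Topology

lemma finrank_span_image_le_ncard {R M κ : Type*} [Semiring R] [StrongRankCondition R]
    [AddCommMonoid M] [Module R M] (v : κ → M) {s : Set κ} (hs : s.Finite) :
    Module.finrank R (Submodule.span R (v '' s)) ≤ s.ncard := by
  have := (hs.image v).fintype
  calc Module.finrank R (Submodule.span R (v '' s))
      ≤ (v '' s).toFinset.card := finrank_span_le_card _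
    _ = (v '' s).ncard := (ncard_eq_toFinset_card' _).symm
    _ ≤ s.ncard := ncard_image_le hs

section PointwiseSum

variable {κ X M : Type*} {g : κ → X → M}

section Semiring

variable (R : Type*) [Semiring R] [AddCommMonoid M] [Module R M]

/-- The synthesis map `c ↦ ∑ k, c k • g k` of a family `g` of functions of which only finitely many
are nonzero at each point. Its range consists of the combinations of the `g k` with arbitrary,
possibly infinitely supported, coefficients. -/
noncomputable def pointwiseSum (hg : ∀ x, {k | g k x ≠ 0}.Finite) : (κ → R) →ₗ[R] (X → M) :=
  LinearMap.pi fun x => ∑ k ∈ (hg x).toFinset, (LinearMap.proj k).smulRight (g k x)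

variable {R}

lemma pointwiseSum_apply_eq_finsum (hg : ∀ x, {k | g k x ≠ 0}.Finite) (c : κ → R) (x : X) :
    pointwiseSum R hg c x = ∑ᶠ k, c k • g k x := by
  have hsupp : Function.support (fun k => c k • g k x) ⊆ (hg x).toFinset := fun k hk =>
    (hg x).mem_toFinset.2 (right_ne_zero_of_smul hk)
  simp [pointwiseSum, finsum_eq_sum_of_support_subset _ hsupp]

lemma pointwiseSum_apply_eq_tsum [TopologicalSpace M] (hg : ∀ x, {k | g k x ≠ 0}.Finite)
    (c : κ → R) (x : X) : pointwiseSum R hg c x = ∑' k, c k • g k x := by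
  have hsupp : (Function.support fun k => c k • g k x).Finite :=
    (hg x).subset fun k hk => right_ne_zero_of_smul hk
  rw [pointwiseSum_apply_eq_finsum, tsum_eq_finsum hsupp]

lemma domRestrict_pointwiseSum_mem_span (hg : ∀ x, {k | g k x ≠ 0}.Finite) {U : Set X}
    (hU : {k | ∃ x ∈ U, g k x ≠ 0}.Finite) (c : κ → R) :
    U.domRestrict (pointwiseSum R hg c) ∈
      Submodule.span R ((fun k => U.domRestrict (g k)) '' {k | ∃ x ∈ U, g k x ≠ 0}) := by
  have hsum : U.domRestrict (pointwiseSum R hg c) =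
      ∑ k ∈ hU.toFinset, c k • U.domRestrict (g k) := by
    ext x
    have hsupp : Function.support (fun k => c k • g k x) ⊆ hU.toFinset := fun k hk =>
      hU.mem_toFinset.2 ⟨x, x.2, right_ne_zero_of_smul hk⟩
    simp [pointwiseSum_apply_eq_finsum, finsum_eq_sum_of_support_subset _ hsupp]
  rw [hsum]
  exact Submodule.sum_mem _ fun k hk => Submodule.smul_mem _ _ <|
    Submodule.subset_span <| mem_image_of_mem _ <| hU.mem_toFinset.1 hk

end Semiring

lemma finiteDimensional_and_finrank_le_of_injOn_domRestrict {K : Type*} [DivisionRing K]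
    [AddCommGroup M] [Module K M] (hg : ∀ x, {k | g k x ≠ 0}.Finite) {U : Set X}
    (hU : {k | ∃ x ∈ U, g k x ≠ 0}.Finite) {S : Submodule K (X → M)}
    (hS : S ≤ LinearMap.range (pointwiseSum K hg))
    (hinj : InjOn U.domRestrict (S : Set (X → M))) :
    FiniteDimensional K S ∧ Module.finrank K S ≤ {k | ∃ x ∈ U, g k x ≠ 0}.ncard := by
  set W := Submodule.span K ((fun k => U.domRestrict (g k)) '' {k | ∃ x ∈ U, g k x ≠ 0})
  have hmem : ∀ f ∈ S, LinearMap.funLeft K M ((↑) : U → X) f ∈ W := by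
    intro f hf
    obtain ⟨c, rfl⟩ := hS hf
    exact domRestrict_pointwiseSum_mem_span hg hU c
  have hres : Function.Injective ((LinearMap.funLeft K M ((↑) : U → X)).restrict hmem) :=
    fun f₁ f₂ h => Subtype.ext (hinj f₁.2 f₂.2 (congrArg Subtype.val h))
  have : FiniteDimensional K W := FiniteDimensional.span_of_finite K (hU.image _)
  exact ⟨.of_injective _ hres, (LinearMap.finrank_le_finrank_of_injective hres).trans
    (finrank_span_image_le_ncard _ hU)⟩

end PointwiseSum

section Shifts

open scoped Pointwise

variable {G Λ M : Type*} [AddGroup G] [TopologicalSpace G] [IsTopologicalAddGroup G] [Zero M]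
  {τ : Λ → G} {K : Set G}

lemma finite_setOf_shift_ne_zero_of_hasCompactSupport {f : G → M} (hf : HasCompactSupport f)
    (hτ : Tendsto τ cofinite (cocompact G)) (hK : IsCompact K) :
    {l | ∃ t ∈ K, f (t - τ l) ≠ 0}.Finite := by
  have hcompact : IsCompact (-tsupport f + K) := hf.isCompact.neg.add hK
  refine (tendsto_cofinite_cocompact_iff.1 hτ _ hcompact).subset ?_
  rintro l ⟨t, ht, hne⟩
  exact ⟨-(t - τ l), neg_mem_neg.2 (subset_tsupport f hne), t, ht, by simp⟩

lemma finite_setOf_generator_shift_ne_zero {ι : Type*} [Finite ι] {φ : ι → G → M}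
    (hφ : ∀ j, HasCompactSupport (φ j)) (hτ : Tendsto τ cofinite (cocompact G))
    (hK : IsCompact K) : {q : ι × Λ | ∃ t ∈ K, φ q.1 (t - τ q.2) ≠ 0}.Finite := by
  refine (finite_iUnion fun j => (finite_setOf_shift_ne_zero_of_hasCompactSupport (hφ j) hτ
    hK).image (Prod.mk j)).subset ?_
  exact fun q hq => mem_iUnion.2 ⟨q.1, q.2, hq, rfl⟩

end Shifts

section Analytic

variable (𝕜 R E F : Type*) [NontriviallyNormedField 𝕜] [NormedAddCommGroup E] [NormedSpace 𝕜 E]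
  [NormedAddCommGroup F] [NormedSpace 𝕜 F]

/-- The space of everywhere `𝕜`-analytic functions `E → F`, as a submodule over a ring `R` of
scalars acting on `F` that may differ from `𝕜`. -/
def analyticSubmodule [NormedRing R] [Module R F] [IsBoundedSMul R F] [SMulCommClass 𝕜 R F] :
    Submodule R (E → F) where
  carrier := {f | ∀ x, AnalyticAt 𝕜 f x}
  add_mem' hf hg x := (hf x).add (hg x)
  zero_mem' _ := analyticAt_const
  smul_mem' _ _ hf x := (hf x).const_smul

variable {𝕜 E F}

lemma injOn_domRestrict_setOf_analyticAt [PreconnectedSpace E] {U : Set E}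
    (hU : (interior U).Nonempty) : InjOn U.domRestrict {f : E → F | ∀ x, AnalyticAt 𝕜 f x} := by
  intro f hf g hg hfg
  obtain ⟨z, hz⟩ := hU
  have hfg_near : f =ᶠ[𝓝 z] g :=
    (domRestrict_eq_domRestrict_iff.1 hfg).eventuallyEq_of_mem (mem_interior_iff_mem_nhds.1 hz)
  exact AnalyticOnNhd.eq_of_eventuallyEq (fun x _ => hf x) (fun x _ => hg x) hfg_near

end Analytic

theorem stmt_7_general {𝕜 K E F ι Λ : Type*} [NontriviallyNormedField 𝕜] [NormedAddCommGroup E]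
    [NormedSpace 𝕜 E] [PreconnectedSpace E] [NormedAddCommGroup F] [NormedSpace 𝕜 F]
    [NormedDivisionRing K] [Module K F] [IsBoundedSMul K F] [SMulCommClass 𝕜 K F] [Finite ι]
    {φ : ι → E → F} (hφ : ∀ j, HasCompactSupport (φ j)) {τ : Λ → E}
    (hτ : Tendsto τ cofinite (cocompact E)) {U : Set E} (hU : IsCompact U)
    (hUint : (interior U).Nonempty) :
    {q : ι × Λ | ∃ t ∈ U, φ q.1 (t - τ q.2) ≠ 0}.Finite ∧
    ∃ S : Submodule K (E → F),
      (S : Set (E → F)) =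
        {f : E → F | (∀ x, AnalyticAt 𝕜 f x) ∧
          ∃ c : ι → Λ → K, ∀ t, f t = ∑' q : ι × Λ, c q.1 q.2 • φ q.1 (t - τ q.2)} ∧
      FiniteDimensional K S ∧
      Module.finrank K S ≤ {q : ι × Λ | ∃ t ∈ U, φ q.1 (t - τ q.2) ≠ 0}.ncard := by
  let g : ι × Λ → E → F := fun q t => φ q.1 (t - τ q.2)
  have hgU : {q | ∃ t ∈ U, g q t ≠ 0}.Finite := finite_setOf_generator_shift_ne_zero hφ hτ hU
  have hg : ∀ t, {q | g q t ≠ 0}.Finite := fun t => by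
    simpa using finite_setOf_generator_shift_ne_zero hφ hτ (isCompact_singleton (x := t))
  refine ⟨hgU, analyticSubmodule 𝕜 K E F ⊓ LinearMap.range (pointwiseSum K hg), ?_,
    finiteDimensional_and_finrank_le_of_injOn_domRestrict hg hgU inf_le_right
      ((injOn_domRestrict_setOf_analyticAt (𝕜 := 𝕜) hUint).mono fun _ hf => hf.1)⟩
  ext f
  refine and_congr_right fun _ => ?_
  calc (∃ c, pointwiseSum K hg c = f)
      ↔ ∃ c : ι × Λ → K, ∀ t, f t = ∑' q, c q • g q t := by
        simp only [funext_iff, pointwiseSum_apply_eq_tsum, eq_comm]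
    _ ↔ ∃ c : ι → Λ → K, ∀ t, f t = ∑' q : ι × Λ, c q.1 q.2 • g q t :=
        (Equiv.curry ι Λ K).exists_congr_left

/-- The set `H` of all analytic functions in the shift-invariant space `V_Φ`
generated by compactly supported `φ_1, …, φ_n` is a finite-dimensional ℂ-linear subspace of
`ℝ → ℂ`, of dimension at most the (finite) number of pairs `(j,ℓ)` for which `φ_j(·−ℓ)` is not
identically zero on `[0,1]`. -/
theorem stmt_7 (n : ℕ) (φ : Fin n → ℝ → ℂ) (hsupp : ∀ j, HasCompactSupport (φ j)) :
    ({q : Fin n × ℤ | ∃ t ∈ Set.Icc (0 : ℝ) 1, φ q.1 (t - (q.2 : ℝ)) ≠ 0}).Finite ∧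
    ∃ S : Submodule ℂ (ℝ → ℂ),
      (S : Set (ℝ → ℂ)) =
        {f : ℝ → ℂ | (∀ x : ℝ, AnalyticAt ℝ f x) ∧
          ∃ c : Fin n → ℤ → ℂ, ∀ t : ℝ,
            f t = ∑' q : Fin n × ℤ, c q.1 q.2 * φ q.1 (t - (q.2 : ℝ))} ∧
      FiniteDimensional ℂ S ∧
      Module.finrank ℂ S ≤
        ({q : Fin n × ℤ | ∃ t ∈ Set.Icc (0 : ℝ) 1, φ q.1 (t - (q.2 : ℝ)) ≠ 0}).ncard :=
  stmt_7_general hsupp Int.tendsto_coe_cofinite isCompact_Icc (by simp)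
end

section
/- Let φ_1, …, φ_n : ℝ → ℂ be compactly supported functions and let H be the set of all analytic functions in the shift-invariant space V_Φ generated by φ_1, …, φ_n. Then there exist s ∈ ℕ, complex numbers λ_1, …, λ_s pairwise distinct modulo 2πi, integers d_1, …, d_s ∈ ℕ₀, 1-periodic analytic functions π_{j,k} : ℝ → ℂ (1 ≤ j ≤ s, 0 ≤ k ≤ d_j), and linear subspaces N_j ⊆ M_{d_j} with A_{d_j}(N_j) ⊆ N_j, such that H equals the linear span of L_1 ∪ … ∪ L_s, where L_j = { t ↦ e^{λ_j t} Σ_{k=0}^{d_j} p_k(t)·π_{j,k}(t) : (p_0,…,p_{d_j}) ∈ N_j }. -/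
/-! An analytic function is determined by its restriction to `[0, 1]`, and only finitely many
translates `φ_j(· - ℓ)` are nonzero there, so `H` is finite-dimensional. It is invariant under the
translation `T f = f(· + 1)`, which is injective, so `H` is the sum of the generalized eigenspaces
of `T` on `H` for finitely many eigenvalues `e^λ`. If `f` is a generalized eigenvector for `e^λ`,
then `g(t) = e^{-λt} f(t)` is annihilated by a power `Δ^{m+1}` of the forward difference operator.
Then `Δ^m g` is 1-periodic and `Δ^m t^m = m!`, so subtracting `t^m · Δ^m g / m!` leaves a function
annihilated by `Δ^m`; by induction `g` is a polynomial in `t` with 1-periodic analytic coefficients.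
-/

section EigenspaceDecomposition

variable {K V : Type*} [Field K] [IsAlgClosed K] [AddCommGroup V] [Module K V]

theorem iSup_eigenvalues_maxGenEigenspace_eq_top [FiniteDimensional K V] (T : Module.End K V) :
    ⨆ μ : T.Eigenvalues, T.maxGenEigenspace μ = ⊤ := by
  refine top_unique ((T.iSup_maxGenEigenspace_eq_top).ge.trans (iSup_le fun μ => ?_))
  by_cases hμ : T.HasEigenvalue μ
  · exact le_iSup (fun μ : T.Eigenvalues => T.maxGenEigenspace μ) ⟨μ, hμ⟩
  · have eq_bot : T.maxGenEigenspace μ = ⊥ := by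
      by_contra h
      exact hμ ((Module.End.hasUnifEigenvalue_iff_hasUnifEigenvalue_one ENat.top_pos).mp h)
    exact eq_bot.trans_le bot_le

theorem exists_fin_iSup_inf_maxGenEigenspace_eq (T : Module.End K V) (H : Submodule K V)
    [FiniteDimensional K H] (hH : ∀ v ∈ H, T v ∈ H) :
    ∃ (s : ℕ) (μ : Fin s → K), Function.Injective μ ∧ (∀ j, T.HasEigenvalue (μ j)) ∧
      ⨆ j, H ⊓ T.maxGenEigenspace (μ j) = H := by
  let S : Module.End K H := T.restrict hH
  obtain ⟨s, ⟨e⟩⟩ := Finite.exists_equiv_fin S.Eigenvalues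
  refine ⟨s, fun j => e.symm j, Subtype.val_injective.comp e.symm.injective, fun j => ?_, ?_⟩
  · obtain ⟨v, hv⟩ := Module.End.HasEigenvalue.exists_hasEigenvector (e.symm j).2
    exact Module.End.hasEigenvalue_of_hasEigenvector (x := (v : V))
      ⟨Module.End.mem_eigenspace_iff.mpr (congrArg Subtype.val hv.apply_eq_smul),
        fun h => hv.2 (Subtype.ext h)⟩
  · have map_maxGenEigenspace (μ : K) :
        (S.maxGenEigenspace μ).map H.subtype = H ⊓ T.maxGenEigenspace μ := by
      rw [Module.End.maxGenEigenspace, Module.End.genEigenspace_restrict,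
        Submodule.map_comap_subtype, Module.End.maxGenEigenspace]
    calc ⨆ j, H ⊓ T.maxGenEigenspace (e.symm j)
        = ⨆ μ : S.Eigenvalues, H ⊓ T.maxGenEigenspace μ :=
          e.symm.iSup_comp (g := fun μ : S.Eigenvalues => H ⊓ T.maxGenEigenspace μ)
      _ = (⨆ μ : S.Eigenvalues, S.maxGenEigenspace μ).map H.subtype := by
          simp only [Submodule.map_iSup, map_maxGenEigenspace]
      _ = H := by
          rw [iSup_eigenvalues_maxGenEigenspace_eq_top, Submodule.map_top, Submodule.range_subtype]

end EigenspaceDecomposition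

theorem span_iUnion_setOf_exists_eq {ι : Sort*} {R V : Type*} {M : ι → Type*} [Semiring R]
    [AddCommMonoid V] [Module R V] [∀ j, AddCommMonoid (M j)] [∀ j, Module R (M j)]
    (N : ∀ j, Submodule R (M j)) (f : ∀ j, M j →ₗ[R] V) :
    Submodule.span R (⋃ j, {v | ∃ p ∈ N j, v = f j p}) = ⨆ j, (N j).map (f j) := by
  have image_eq (j : ι) : {v | ∃ p ∈ N j, v = f j p} = ((N j).map (f j) : Set V) :=
    Set.ext fun _ => exists_congr fun _ => and_congr_right' eq_comm
  simp only [image_eq, Submodule.span_iUnion, Submodule.span_eq]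

theorem fwdDiff_iter_smul_of_periodic {M R G : Type*} [AddCommMonoid M] [Ring R] [AddCommGroup G]
    [Module R G] {h : M} {ρ : M → G} (hρ : Function.Periodic ρ h) (f : M → R) (m : ℕ) :
    (fwdDiff h)^[m] (f • ρ) = (fwdDiff h)^[m] f • ρ := by
  have fwdDiff_ρ : fwdDiff h ρ = 0 := funext fun t => sub_eq_zero.mpr (hρ t)
  induction m generalizing f with
  | zero => rfl
  | succ m ih =>
    rw [Function.iterate_succ_apply, Function.iterate_succ_apply, fwdDiff_smul, fwdDiff_ρ,
      smul_zero, smul_zero, add_zero, add_zero, ih]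

theorem fwdDiff_iter_sub_pow_smul_eq_zero {R G : Type*} [CommRing R] [AddCommGroup G] [Module R G]
    {g ρ : R → G} {m : ℕ} (hρ : Function.Periodic ρ 1)
    (hg : (m.factorial : R) • ρ = (fwdDiff 1)^[m] g) :
    (fwdDiff 1)^[m] (g - (fun t : R => t ^ m) • ρ) = 0 := by
  have sub_eq : g - (fun t : R => t ^ m) • ρ = g + (-1 : R) • ((fun t : R => t ^ m) • ρ) := by
    rw [neg_one_smul, ← sub_eq_add_neg]
  have factorial_smul : (m.factorial : R → R) • ρ = (m.factorial : R) • ρ := rfl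
  rw [sub_eq, fwdDiff_iter_add, fwdDiff_iter_const_smul, fwdDiff_iter_smul_of_periodic hρ,
    fwdDiff_iter_eq_factorial, factorial_smul, hg, neg_one_smul, add_neg_cancel]

theorem analyticAt_fwdDiff_iter {E : Type*} [NormedAddCommGroup E] [NormedSpace ℝ E] {g : ℝ → E}
    (hg : ∀ x, AnalyticAt ℝ g x) (h : ℝ) (m : ℕ) (x : ℝ) :
    AnalyticAt ℝ ((fwdDiff h)^[m] g) x := by
  induction m generalizing x with
  | zero => exact hg x
  | succ m ih =>
    rw [Function.iterate_succ_apply']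
    have translate : AnalyticAt ℝ (fun t => (fwdDiff h)^[m] g (t + h)) x :=
      (ih (x + h)).fun_comp (f := (· + h)) (by fun_prop)
    exact translate.sub (ih x)

theorem cexp_mul_ofReal_add_one (lam : ℂ) (t : ℝ) :
    Complex.exp (lam * ((t + 1 : ℝ) : ℂ)) = Complex.exp (lam * t) * Complex.exp lam := by
  rw [Complex.ofReal_add, Complex.ofReal_one, mul_add, mul_one, Complex.exp_add]

theorem analyticAt_cexp_mul_ofReal (lam : ℂ) (x : ℝ) :
    AnalyticAt ℝ (fun t : ℝ => Complex.exp (lam * t)) x :=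
  analyticAt_cexp.restrictScalars.comp (f := fun t : ℝ => lam * (t : ℂ))
    (analyticAt_const.mul (Complex.ofRealCLM.analyticAt x))

namespace ShiftInvariant

open Polynomial

section ExponentialPolynomials

/-- The translation `f ↦ f (· + 1)` on all functions `ℝ → ℂ`. -/
noncomputable def unitShift : Module.End ℂ (ℝ → ℂ) :=
  LinearMap.funLeft ℂ ℂ (· + 1)

theorem unitShift_injective : Function.Injective unitShift :=
  LinearMap.funLeft_injective_of_surjective ℂ ℂ _ (add_right_surjective 1)

theorem unitShift_apply (f : ℝ → ℂ) (t : ℝ) : unitShift f t = f (t + 1) :=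
  rfl

theorem unitShift_sub_cexp_smul_one_pow_apply (lam : ℂ) (m : ℕ) (f : ℝ → ℂ) (t : ℝ) :
    ((unitShift - Complex.exp lam • 1) ^ m) f t = Complex.exp (lam * t) * Complex.exp lam ^ m *
      (fwdDiff (1 : ℝ))^[m] (fun u : ℝ => Complex.exp (-lam * u) * f u) t := by
  induction m generalizing t with
  | zero =>
    simp only [pow_zero, Module.End.one_apply, mul_one, Function.iterate_zero, id, ← mul_assoc,
      ← Complex.exp_add, neg_mul, add_neg_cancel, Complex.exp_zero, one_mul]
  | succ m ih =>
    rw [pow_succ', Module.End.mul_apply, Function.iterate_succ_apply']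
    simp only [LinearMap.sub_apply, LinearMap.smul_apply, Module.End.one_apply, Pi.sub_apply,
      Pi.smul_apply, unitShift_apply, ih, fwdDiff, smul_eq_mul, cexp_mul_ofReal_add_one]
    ring

/-- The space `M_d = P_0 ⊕ ⋯ ⊕ P_d`, as tuples of polynomials whose `k`-th entry has degree at
most `k`. -/
noncomputable def degreeTuples (d : ℕ) : Submodule ℂ (Fin (d + 1) → ℂ[X]) :=
  Submodule.pi Set.univ fun k => degreeLE ℂ (k : ℕ)

theorem mem_degreeTuples {d : ℕ} {p : Fin (d + 1) → ℂ[X]} :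
    p ∈ degreeTuples d ↔ ∀ k, (p k).degree ≤ (k : ℕ) := by
  simp only [degreeTuples, Submodule.mem_pi, Set.mem_univ, forall_const, mem_degreeLE]

theorem comp_X_add_one_mem_degreeTuples {d : ℕ} {p : Fin (d + 1) → ℂ[X]}
    (hp : p ∈ degreeTuples d) : (fun k => (p k).comp (X + 1)) ∈ degreeTuples d := by
  simpa only [mem_degreeTuples, ← C_1, ← taylor_apply, degree_taylor] using hp

/-- The 1-periodic analytic functions, which serve as coefficients of exponential polynomials. -/
structure IsPeriodicAnalytic (ρ : ℝ → ℂ) : Prop where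
  periodic : Function.Periodic ρ 1
  analyticAt : ∀ x, AnalyticAt ℝ ρ x

/-- The exponential polynomial with exponent `λ` and polynomials `p_k`, as a linear function of
`(p_0, …, p_d)`. Only `π_0, …, π_d` matter: the sequence is infinite so that its type does not
depend on `d`. -/
noncomputable def expPolynomial (lam : ℂ) (π : ℕ → ℝ → ℂ) (d : ℕ) :
    (Fin (d + 1) → ℂ[X]) →ₗ[ℂ] (ℝ → ℂ) where
  toFun p t := Complex.exp (lam * t) * ∑ k : Fin (d + 1), (p k).eval (t : ℂ) * π k t
  map_add' p q := by
    ext t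
    simp only [Pi.add_apply, eval_add, add_mul, Finset.sum_add_distrib, mul_add]
  map_smul' a p := by
    ext t
    simp only [Pi.smul_apply, eval_smul, smul_eq_mul, RingHom.id_apply, mul_assoc,
      ← Finset.mul_sum]
    exact mul_left_comm _ _ _

theorem expPolynomial_apply (lam : ℂ) (π : ℕ → ℝ → ℂ) {d : ℕ} (p : Fin (d + 1) → ℂ[X]) (t : ℝ) :
    expPolynomial lam π d p t =
      Complex.exp (lam * t) * ∑ k : Fin (d + 1), (p k).eval (t : ℂ) * π k t :=
  rfl

/-- A single summand `e^{λt} q(t) ρ(t)` of an exponential polynomial. -/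
noncomputable def expMonomial (lam : ℂ) (q : ℂ[X]) (ρ : ℝ → ℂ) : ℝ → ℂ :=
  fun t => Complex.exp (lam * t) * (q.eval (t : ℂ) * ρ t)

theorem map_expPolynomial_le_iff {lam : ℂ} {π : ℕ → ℝ → ℂ} {d : ℕ} {W : Submodule ℂ (ℝ → ℂ)} :
    (degreeTuples d).map (expPolynomial lam π d) ≤ W ↔
      ∀ k ≤ d, ∀ q : ℂ[X], q.degree ≤ k → expMonomial lam q (π k) ∈ W := by
  rw [Submodule.map_le_iff_le_comap]
  constructor
  · intro h k hk q hq
    let i : Fin (d + 1) := ⟨k, Nat.lt_succ_of_le hk⟩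
    have single_mem : Pi.single i q ∈ degreeTuples d := by
      refine mem_degreeTuples.mpr fun l => ?_
      rcases eq_or_ne l i with rfl | hl
      · simpa only [Pi.single_eq_same] using hq
      · simp only [Pi.single_eq_of_ne hl, degree_zero, bot_le]
    have expPolynomial_single :
        expPolynomial lam π d (Pi.single i q) = expMonomial lam q (π k) := by
      funext t
      rw [expPolynomial_apply, expMonomial, Finset.sum_eq_single i, Pi.single_eq_same]
      · exact fun l _ hl => by rw [Pi.single_eq_of_ne hl, eval_zero, zero_mul]
      · exact fun hi => absurd (Finset.mem_univ i) hi
    exact expPolynomial_single ▸ h single_mem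
  · intro h p hp
    have eq_sum : expPolynomial lam π d p = ∑ k, expMonomial lam (p k) (π k) := by
      funext t
      simp only [expPolynomial_apply, Finset.sum_apply, expMonomial, ← Finset.mul_sum]
    rw [Submodule.mem_comap, eq_sum]
    exact W.sum_mem fun k _ =>
      h k (Nat.le_of_lt_succ k.isLt) (p k) (mem_degreeTuples.mp hp k)

theorem expPolynomial_comp_X_add_one {lam : ℂ} {π : ℕ → ℝ → ℂ}
    (hπ : ∀ k, Function.Periodic (π k) 1) {d : ℕ} (p : Fin (d + 1) → ℂ[X]) :
    expPolynomial lam π d (fun k => (p k).comp (X + 1)) =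
      (Complex.exp lam)⁻¹ • unitShift (expPolynomial lam π d p) := by
  rw [eq_inv_smul_iff₀ (Complex.exp_ne_zero lam)]
  funext t
  simp only [Pi.smul_apply, smul_eq_mul, unitShift_apply, expPolynomial_apply, (hπ _) t,
    cexp_mul_ofReal_add_one, eval_comp, eval_add, eval_X, eval_one]
  rw [Complex.ofReal_add, Complex.ofReal_one]
  ring

/-- All elements of `W` are exponential polynomials of exponent `λ` for one common degree `d` and
one common sequence of periodic analytic coefficients. -/
def HasExpPolynomialForm (lam : ℂ) (W : Submodule ℂ (ℝ → ℂ)) : Prop :=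
  ∃ (d : ℕ) (π : ℕ → ℝ → ℂ), (∀ k, IsPeriodicAnalytic (π k)) ∧
    W ≤ (degreeTuples d).map (expPolynomial lam π d)

theorem HasExpPolynomialForm.mono {lam : ℂ} {W W' : Submodule ℂ (ℝ → ℂ)}
    (h : HasExpPolynomialForm lam W') (hW : W ≤ W') : HasExpPolynomialForm lam W :=
  let ⟨d, π, hπ, hW'⟩ := h
  ⟨d, π, hπ, hW.trans hW'⟩

theorem hasExpPolynomialForm_bot (lam : ℂ) : HasExpPolynomialForm lam ⊥ :=
  ⟨0, 0, fun _ => ⟨fun _ => rfl, fun _ => analyticAt_const⟩, bot_le⟩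

theorem hasExpPolynomialForm_span_expMonomial (lam : ℂ) (q : ℂ[X]) {ρ : ℝ → ℂ}
    (hρ : IsPeriodicAnalytic ρ) : HasExpPolynomialForm lam (ℂ ∙ expMonomial lam q ρ) :=
  ⟨q.natDegree, fun _ => ρ, fun _ => hρ, (Submodule.span_singleton_le_iff_mem _ _).mpr <|
    map_expPolynomial_le_iff.mp le_rfl q.natDegree le_rfl q degree_le_natDegree⟩

theorem HasExpPolynomialForm.sup {lam : ℂ} {W₁ W₂ : Submodule ℂ (ℝ → ℂ)}
    (h₁ : HasExpPolynomialForm lam W₁) (h₂ : HasExpPolynomialForm lam W₂) :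
    HasExpPolynomialForm lam (W₁ ⊔ W₂) := by
  obtain ⟨d₁, π₁, hπ₁, hW₁⟩ := h₁
  obtain ⟨d₂, π₂, hπ₂, hW₂⟩ := h₂
  -- Moving the second family to higher indices only relaxes its degree bounds.
  let π : ℕ → ℝ → ℂ := fun k => if k ≤ d₁ then π₁ k else π₂ (k - (d₁ + 1))
  have expMonomial_mem {k : ℕ} (hk : k ≤ d₁ + 1 + d₂) {q : ℂ[X]} (hq : q.degree ≤ k) :
      expMonomial lam q (π k) ∈
        (degreeTuples (d₁ + 1 + d₂)).map (expPolynomial lam π (d₁ + 1 + d₂)) :=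
    map_expPolynomial_le_iff.mp le_rfl k hk q hq
  refine ⟨d₁ + 1 + d₂, π, fun k => ?_, sup_le (hW₁.trans ?_) (hW₂.trans ?_)⟩
  · by_cases hk : k ≤ d₁
    · simpa only [π, if_pos hk] using hπ₁ k
    · simpa only [π, if_neg hk] using hπ₂ _
  · refine map_expPolynomial_le_iff.mpr fun k hk q hq => ?_
    have π_left : π k = π₁ k := if_pos hk
    exact π_left ▸ expMonomial_mem (by lia) hq
  · refine map_expPolynomial_le_iff.mpr fun k hk q hq => ?_
    have π_right : π (d₁ + 1 + k) = π₂ k := by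
      simp only [π, if_neg (show ¬d₁ + 1 + k ≤ d₁ by lia), Nat.add_sub_cancel_left]
    exact π_right ▸ expMonomial_mem (by lia) (hq.trans (by exact_mod_cast Nat.le_add_left k _))

theorem hasExpPolynomialForm_span_of_fwdDiff_iter_eq_zero (lam : ℂ) (m : ℕ) {g : ℝ → ℂ}
    (hg : ∀ x, AnalyticAt ℝ g x) (hΔ : (fwdDiff (1 : ℝ))^[m] g = 0) :
    HasExpPolynomialForm lam (ℂ ∙ fun t : ℝ => Complex.exp (lam * t) * g t) := by
  induction m generalizing g with
  | zero =>
    obtain rfl : g = 0 := hΔ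
    refine (hasExpPolynomialForm_bot lam).mono (le_of_eq ?_)
    simp only [Pi.zero_apply, mul_zero]
    exact Submodule.span_zero_singleton ℂ
  | succ m ih =>
    let ρ : ℝ → ℂ := (m.factorial : ℝ)⁻¹ • (fwdDiff (1 : ℝ))^[m] g
    have hρ : IsPeriodicAnalytic ρ := by
      refine ⟨fun t => ?_, fun x => analyticAt_const.smul (analyticAt_fwdDiff_iter hg 1 m x)⟩
      rw [Function.iterate_succ_apply'] at hΔ
      exact congrArg ((m.factorial : ℝ)⁻¹ • ·) (sub_eq_zero.mp (congrFun hΔ t))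
    let r : ℝ → ℂ := g - (fun t : ℝ => t ^ m) • ρ
    have hr : ∀ x, AnalyticAt ℝ r x := fun x =>
      (hg x).sub ((analyticAt_id.pow m).smul (hρ.analyticAt x))
    have fwdDiff_r : (fwdDiff (1 : ℝ))^[m] r = 0 :=
      fwdDiff_iter_sub_pow_smul_eq_zero hρ.periodic
        (smul_inv_smul₀ (Nat.cast_ne_zero.mpr m.factorial_ne_zero) _)
    refine ((ih hr fwdDiff_r).sup (hasExpPolynomialForm_span_expMonomial lam (X ^ m) hρ)).mono ?_
    rw [Submodule.span_singleton_le_iff_mem]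
    have split : (fun t : ℝ => Complex.exp (lam * t) * g t) =
        (fun t : ℝ => Complex.exp (lam * t) * r t) + expMonomial lam (X ^ m) ρ := by
      funext t
      simp only [r, expMonomial, Pi.add_apply, Pi.sub_apply, Pi.smul_apply', Complex.real_smul,
        Complex.ofReal_pow, eval_pow, eval_X]
      ring
    rw [split]
    exact Submodule.add_mem_sup (Submodule.mem_span_singleton_self _)
      (Submodule.mem_span_singleton_self _)

theorem hasExpPolynomialForm_of_le_maxGenEigenspace {lam : ℂ} {W : Submodule ℂ (ℝ → ℂ)}
    (hfg : W.FG) (hanalytic : ∀ f ∈ W, ∀ x, AnalyticAt ℝ f x)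
    (hW : W ≤ unitShift.maxGenEigenspace (Complex.exp lam)) : HasExpPolynomialForm lam W := by
  obtain ⟨S, rfl⟩ := hfg
  rw [Submodule.span_eq_iSup_of_singleton_spans]
  simp only [Finset.mem_coe]
  rw [← Finset.sup_eq_iSup S (fun f => ℂ ∙ f)]
  refine Finset.sup_induction (hasExpPolynomialForm_bot lam) (fun _ h₁ _ h₂ => h₁.sup h₂)
    fun f hf => ?_
  have hfS : f ∈ Submodule.span ℂ (S : Set (ℝ → ℂ)) := Submodule.subset_span hf
  obtain ⟨m, hm⟩ := (Module.End.mem_maxGenEigenspace _ _ _).mp (hW hfS)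
  let g : ℝ → ℂ := fun t => Complex.exp (-lam * t) * f t
  have hg : ∀ x, AnalyticAt ℝ g x := fun x =>
    (analyticAt_cexp_mul_ofReal (-lam) x).mul (hanalytic f hfS x)
  have fwdDiff_g : (fwdDiff (1 : ℝ))^[m] g = 0 := by
    funext t
    have h := unitShift_sub_cexp_smul_one_pow_apply lam m f t
    rw [hm] at h
    exact (mul_eq_zero.mp h.symm).resolve_left
      (mul_ne_zero (Complex.exp_ne_zero _) (pow_ne_zero _ (Complex.exp_ne_zero _)))
  have f_eq : f = fun t : ℝ => Complex.exp (lam * t) * g t := by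
    funext t
    rw [← mul_assoc, ← Complex.exp_add, neg_mul, add_neg_cancel, Complex.exp_zero, one_mul]
  rw [f_eq]
  exact hasExpPolynomialForm_span_of_fwdDiff_iter_eq_zero lam m hg fwdDiff_g

end ExponentialPolynomials

section CoefficientSpaces

variable (H : Submodule ℂ (ℝ → ℂ)) (lam : ℂ) (π : ℕ → ℝ → ℂ) (d : ℕ)

/-- The space `N` of the coefficient tuples in `M_d` whose exponential polynomial lies in `H`, the
largest one that can occur for given `λ`, `π` and `d`. -/
noncomputable def coefficientSpace : Submodule ℂ (Fin (d + 1) → ℂ[X]) :=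
  degreeTuples d ⊓ H.comap (expPolynomial lam π d)

theorem map_coefficientSpace_le : (coefficientSpace H lam π d).map (expPolynomial lam π d) ≤ H :=
  Submodule.map_le_iff_le_comap.mpr inf_le_right

variable {H lam π d}

theorem le_map_coefficientSpace {W : Submodule ℂ (ℝ → ℂ)} (hWH : W ≤ H)
    (hW : W ≤ (degreeTuples d).map (expPolynomial lam π d)) :
    W ≤ (coefficientSpace H lam π d).map (expPolynomial lam π d) := by
  intro f hf
  obtain ⟨p, hp, rfl⟩ := hW hf
  exact ⟨p, ⟨hp, hWH hf⟩, rfl⟩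

theorem comp_X_add_one_mem_coefficientSpace (hπ : ∀ k, Function.Periodic (π k) 1)
    (hH : ∀ f ∈ H, unitShift f ∈ H) {p : Fin (d + 1) → ℂ[X]}
    (hp : p ∈ coefficientSpace H lam π d) :
    (fun k => (p k).comp (X + 1)) ∈ coefficientSpace H lam π d := by
  have image_mem : expPolynomial lam π d (fun k => (p k).comp (X + 1)) ∈ H := by
    rw [expPolynomial_comp_X_add_one hπ]
    exact H.smul_mem _ (hH _ hp.2)
  exact ⟨comp_X_add_one_mem_degreeTuples hp.1, image_mem⟩

end CoefficientSpaces

theorem exists_fin_iSup_inf_maxGenEigenspace_cexp_eq (H : Submodule ℂ (ℝ → ℂ))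
    [FiniteDimensional ℂ H] (hH : ∀ f ∈ H, unitShift f ∈ H) :
    ∃ (s : ℕ) (lam : Fin s → ℂ), Function.Injective (fun j => Complex.exp (lam j)) ∧
      ⨆ j, H ⊓ unitShift.maxGenEigenspace (Complex.exp (lam j)) = H := by
  obtain ⟨s, μ, μ_inj, hμ, iSup_eq⟩ := exists_fin_iSup_inf_maxGenEigenspace_eq unitShift H hH
  have μ_ne_zero (j : Fin s) : μ j ≠ 0 := by
    intro h
    refine hμ j ?_
    rw [h, ← Module.End.eigenspace, Module.End.eigenspace_zero, LinearMap.ker_eq_bot]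
    exact unitShift_injective
  refine ⟨s, fun j => Complex.log (μ j), ?_, ?_⟩
  all_goals simpa only [Complex.exp_log (μ_ne_zero _)]

theorem sub_ne_two_pi_I_mul_of_cexp_ne {z w : ℂ} (h : Complex.exp z ≠ Complex.exp w) (k : ℤ) :
    z - w ≠ 2 * Real.pi * Complex.I * k := by
  refine fun hk => h (Complex.exp_eq_exp_iff_exists_int.mpr ⟨k, ?_⟩)
  rw [← sub_eq_iff_eq_add', hk]
  ring

section ShiftInvariantSpaces

theorem finite_setOf_exists_translate_ne_zero {ι E : Type*} [Finite ι] [Zero E] {φ : ι → ℝ → E}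
    (hφ : ∀ j, HasCompactSupport (φ j)) {K : Set ℝ} (hK : IsCompact K) :
    {q : ι × ℤ | ∃ t ∈ K, φ q.1 (t - q.2) ≠ 0}.Finite := by
  have finite_shifts (j : ι) :
      {l : ℤ | (l : ℝ) ∈ (fun p : ℝ × ℝ => p.1 - p.2) '' (K ×ˢ tsupport (φ j))}.Finite :=
    (Int.isClosedEmbedding_coe_real.isCompact_preimage
      ((hK.prod (hφ j).isCompact).image continuous_sub)).finite_of_discrete
  refine (Set.finite_iUnion fun j => (finite_shifts j).image (Prod.mk j)).subset ?_
  rintro ⟨j, l⟩ ⟨t, ht, hne⟩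
  exact Set.mem_iUnion.mpr
    ⟨j, l, ⟨(t, t - l), ⟨ht, subset_tsupport _ hne⟩, sub_sub_cancel _ _⟩, rfl⟩

variable {ι : Type*} [Finite ι] {φ : ι → ℝ → ℂ}

theorem summable_mul_translate (hφ : ∀ j, HasCompactSupport (φ j)) (c : ι → ℤ → ℂ) (t : ℝ) :
    Summable fun q : ι × ℤ => c q.1 q.2 * φ q.1 (t - q.2) :=
  summable_of_hasFiniteSupport <|
    (finite_setOf_exists_translate_ne_zero hφ (isCompact_singleton (x := t))).subset
      fun _ hq => ⟨t, rfl, right_ne_zero_of_mul hq⟩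

variable (hφ : ∀ j, HasCompactSupport (φ j))

/-- The map `c ↦ Σ c(j,ℓ) φ_j(· - ℓ)`, whose range is the shift-invariant space `V_Φ`. The compact
supports make the sum finite at each point, hence linear in `c`. -/
noncomputable def synthesis : (ι → ℤ → ℂ) →ₗ[ℂ] (ℝ → ℂ) where
  toFun c t := ∑' q : ι × ℤ, c q.1 q.2 * φ q.1 (t - q.2)
  map_add' c c' := by
    ext t
    simp only [Pi.add_apply, add_mul]
    exact (summable_mul_translate hφ c t).tsum_add (summable_mul_translate hφ c' t)
  map_smul' a c := by
    ext t
    simp only [Pi.smul_apply, smul_eq_mul, RingHom.id_apply, mul_assoc, tsum_mul_left]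

/-- The space of functions `ℝ → ℂ` that are real-analytic at every point. -/
def analyticFunctions : Submodule ℂ (ℝ → ℂ) where
  carrier := {f | ∀ x, AnalyticAt ℝ f x}
  zero_mem' _ := analyticAt_const
  add_mem' hf hg x := (hf x).add (hg x)
  smul_mem' _ _ hf x := analyticAt_const.smul (hf x)

theorem unitShift_mem_analyticFunctions {f : ℝ → ℂ} (hf : f ∈ analyticFunctions) :
    unitShift f ∈ analyticFunctions :=
  fun x => (hf (x + 1)).fun_comp (f := (· + 1)) (by fun_prop)

theorem unitShift_mem_range_synthesis {f : ℝ → ℂ} (hf : f ∈ LinearMap.range (synthesis hφ)) :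
    unitShift f ∈ LinearMap.range (synthesis hφ) := by
  obtain ⟨c, rfl⟩ := hf
  refine ⟨fun j l => c j (l + 1), funext fun t => ?_⟩
  let reindex : ι × ℤ ≃ ι × ℤ := (Equiv.refl ι).prodCongr (Equiv.addRight 1)
  calc ∑' q : ι × ℤ, c q.1 (q.2 + 1) * φ q.1 (t - q.2)
      = ∑' q : ι × ℤ, c (reindex q).1 (reindex q).2 * φ (reindex q).1 (t + 1 - (reindex q).2) :=
        tsum_congr fun q => by simp [reindex]
    _ = ∑' q : ι × ℤ, c q.1 q.2 * φ q.1 (t + 1 - q.2) :=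
        reindex.tsum_eq fun q : ι × ℤ => c q.1 q.2 * φ q.1 (t + 1 - q.2)

/-- The restriction of functions from `ℝ` to `K`, as a linear map. -/
noncomputable def restriction (K : Set ℝ) : (ℝ → ℂ) →ₗ[ℂ] (K → ℂ) :=
  LinearMap.funLeft ℂ ℂ Subtype.val

theorem fg_map_restriction_range_synthesis {K : Set ℝ} (hK : IsCompact K) :
    ((LinearMap.range (synthesis hφ)).map (restriction K)).FG := by
  let F : Finset (ι × ℤ) := (finite_setOf_exists_translate_ne_zero hφ hK).toFinset
  let translate (q : ι × ℤ) : K → ℂ := fun t => φ q.1 (t - q.2)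
  refine Submodule.FG.of_le (Submodule.fg_span (F.finite_toSet.image translate)) ?_
  rintro _ ⟨_, ⟨c, rfl⟩, rfl⟩
  have restriction_eq_sum : restriction K (synthesis hφ c) = ∑ q ∈ F, c q.1 q.2 • translate q := by
    funext t
    rw [Finset.sum_apply]
    refine tsum_eq_sum fun q hq => ?_
    by_contra hne
    exact hq ((Set.Finite.mem_toFinset _).mpr ⟨t, t.2, right_ne_zero_of_mul hne⟩)
  rw [restriction_eq_sum]
  exact Submodule.sum_mem _ fun q hq =>
    Submodule.smul_mem _ _ (Submodule.subset_span ⟨q, hq, rfl⟩)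

theorem analyticFunctions_inf_ker_restriction_eq_bot {K : Set ℝ} (hK : (interior K).Nonempty) :
    analyticFunctions ⊓ LinearMap.ker (restriction K) = ⊥ := by
  obtain ⟨x, hx⟩ := hK
  refine eq_bot_iff.mpr fun f hf => ?_
  refine AnalyticOnNhd.eq_of_eventuallyEq (𝕜 := ℝ) (z₀ := x) (fun x _ => hf.1 x)
    (fun _ _ => analyticAt_const) ?_
  filter_upwards [mem_interior_iff_mem_nhds.mp hx] with t ht
  exact congrFun (LinearMap.mem_ker.mp hf.2) ⟨t, ht⟩

/-- The space `H` of the analytic functions in the shift-invariant space `V_Φ`. -/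
noncomputable def analyticSpace : Submodule ℂ (ℝ → ℂ) :=
  analyticFunctions ⊓ LinearMap.range (synthesis hφ)

theorem unitShift_mem_analyticSpace {f : ℝ → ℂ} (hf : f ∈ analyticSpace hφ) :
    unitShift f ∈ analyticSpace hφ :=
  ⟨unitShift_mem_analyticFunctions hf.1, unitShift_mem_range_synthesis hφ hf.2⟩

instance finiteDimensional_analyticSpace : FiniteDimensional ℂ (analyticSpace hφ) := by
  let r := restriction (Set.Icc 0 1)
  have fg_map : ((analyticSpace hφ).map r).FG :=
    Submodule.FG.of_le (fg_map_restriction_range_synthesis hφ isCompact_Icc)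
      (Submodule.map_mono inf_le_right)
  have inf_ker_eq_bot : analyticSpace hφ ⊓ LinearMap.ker r = ⊥ :=
    eq_bot_iff.mpr <| (inf_le_inf_right _ inf_le_left).trans_eq <|
      analyticFunctions_inf_ker_restriction_eq_bot (by simp [interior_Icc])
  exact Module.Finite.iff_fg.mpr
    (Submodule.fg_of_fg_map_of_fg_inf_ker r fg_map (inf_ker_eq_bot ▸ Submodule.fg_bot))

theorem coe_analyticSpace : (analyticSpace hφ : Set (ℝ → ℂ)) =
    {f | (∀ x : ℝ, AnalyticAt ℝ f x) ∧ ∃ c : ι → ℤ → ℂ, ∀ t : ℝ,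
      f t = ∑' q : ι × ℤ, c q.1 q.2 * φ q.1 (t - (q.2 : ℝ))} :=
  Set.ext fun _ => and_congr_right' (exists_congr fun _ => eq_comm.trans funext_iff)

end ShiftInvariantSpaces

end ShiftInvariant

open ShiftInvariant in
theorem stmt_9_general (H : Submodule ℂ (ℝ → ℂ)) [FiniteDimensional ℂ H]
    (hanalytic : ∀ f ∈ H, ∀ x : ℝ, AnalyticAt ℝ f x)
    (hshift : ∀ f ∈ H, (fun t : ℝ => f (t + 1)) ∈ H) :
    ∃ (s : ℕ) (lam : Fin s → ℂ) (d : Fin s → ℕ) (π : Fin s → ℕ → ℝ → ℂ)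
      (Nsp : (j : Fin s) → Submodule ℂ (Fin (d j + 1) → Polynomial ℂ)),
      (∀ j m : Fin s, j ≠ m → ∀ k : ℤ, lam j - lam m ≠ 2 * Real.pi * Complex.I * k) ∧
      (∀ j : Fin s, ∀ k ≤ d j,
        (∀ t : ℝ, π j k (t + 1) = π j k t) ∧ (∀ x : ℝ, AnalyticAt ℝ (π j k) x)) ∧
      (∀ j : Fin s, ∀ p ∈ Nsp j, ∀ k : Fin (d j + 1), (p k).degree ≤ (k : ℕ)) ∧
      (∀ j : Fin s, ∀ p ∈ Nsp j, (fun k => (p k).comp (Polynomial.X + 1)) ∈ Nsp j) ∧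
      (H : Set (ℝ → ℂ))
        = ↑(Submodule.span ℂ (⋃ j : Fin s,
            {g : ℝ → ℂ | ∃ p ∈ Nsp j, g = fun t : ℝ =>
              Complex.exp (lam j * (t : ℂ)) *
                ∑ k : Fin (d j + 1), (p k).eval (t : ℂ) * π j (k : ℕ) t})) := by
  obtain ⟨s, lam, exp_inj, hH⟩ := exists_fin_iSup_inf_maxGenEigenspace_cexp_eq H hshift
  have hform (j : Fin s) : HasExpPolynomialForm (lam j)
      (H ⊓ unitShift.maxGenEigenspace (Complex.exp (lam j))) :=
    hasExpPolynomialForm_of_le_maxGenEigenspace (Submodule.FG.of_finite)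
      (fun f hf => hanalytic f hf.1) inf_le_right
  choose d π hπ hd using hform
  refine ⟨s, lam, d, π, fun j => coefficientSpace H (lam j) (π j) (d j),
    fun j m hjm => sub_ne_two_pi_I_mul_of_cexp_ne (exp_inj.ne hjm),
    fun j k _ => ⟨(hπ j k).periodic, (hπ j k).analyticAt⟩,
    fun j p hp => mem_degreeTuples.mp hp.1,
    fun j p hp => comp_X_add_one_mem_coefficientSpace (fun k => (hπ j k).periodic) hshift hp, ?_⟩
  have H_eq : ⨆ j, (coefficientSpace H (lam j) (π j) (d j)).map (expPolynomial (lam j) (π j) (d j))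
      = H :=
    le_antisymm (iSup_le fun j => map_coefficientSpace_le H (lam j) (π j) (d j))
      (hH.ge.trans (iSup_mono fun j => le_map_coefficientSpace inf_le_left (hd j)))
  exact (congrArg _ ((span_iUnion_setOf_exists_eq _ _).trans H_eq)).symm

/-- The set `H` of all analytic functions in the shift-invariant space `V_Φ`
generated by compactly supported `φ_1, …, φ_n` is a span of spaces `L_1, …, L_s`, where
`L_j = { t ↦ e^{λ_j t} Σ_{k=0}^{d_j} p_k(t)·π_{j,k}(t) : (p_0,…,p_{d_j}) ∈ N_j }` for
pairwise distinct modulo `2πi` numbers `λ_j`, 1-periodic analytic functions `π_{j,k}`, and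
subspaces `N_j ⊆ M_{d_j}` invariant under the shift operator `A_{d_j}`. -/
theorem stmt_9 (n : ℕ) (φ : Fin n → ℝ → ℂ) (hsupp : ∀ j, HasCompactSupport (φ j)) :
    ∃ (s : ℕ) (lam : Fin s → ℂ) (d : Fin s → ℕ) (π : Fin s → ℕ → ℝ → ℂ)
      (Nsp : (j : Fin s) → Submodule ℂ (Fin (d j + 1) → Polynomial ℂ)),
      (∀ j m : Fin s, j ≠ m → ∀ k : ℤ, lam j - lam m ≠ 2 * Real.pi * Complex.I * k) ∧
      (∀ j : Fin s, ∀ k ≤ d j,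
        (∀ t : ℝ, π j k (t + 1) = π j k t) ∧ (∀ x : ℝ, AnalyticAt ℝ (π j k) x)) ∧
      (∀ j : Fin s, ∀ p ∈ Nsp j, ∀ k : Fin (d j + 1), (p k).degree ≤ (k : ℕ)) ∧
      (∀ j : Fin s, ∀ p ∈ Nsp j, (fun k => (p k).comp (Polynomial.X + 1)) ∈ Nsp j) ∧
      {f : ℝ → ℂ | (∀ x : ℝ, AnalyticAt ℝ f x) ∧
          ∃ c : Fin n → ℤ → ℂ, ∀ t : ℝ,
            f t = ∑' q : Fin n × ℤ, c q.1 q.2 * φ q.1 (t - (q.2 : ℝ))}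
        = ↑(Submodule.span ℂ (⋃ j : Fin s,
            {g : ℝ → ℂ | ∃ p ∈ Nsp j, g = fun t : ℝ =>
              Complex.exp (lam j * (t : ℂ)) *
                ∑ k : Fin (d j + 1), (p k).eval (t : ℂ) * π j (k : ℕ) t})) := by
  rw [← ShiftInvariant.coe_analyticSpace hsupp]
  exact stmt_9_general (ShiftInvariant.analyticSpace hsupp) (fun _ hf => hf.1)
    (fun _ => ShiftInvariant.unitShift_mem_analyticSpace hsupp)
end

section
/- Let φ : ℝ → ℂ be continuous, integrable and compactly supported, with linearly independent integer shifts. Let λ ∈ ℂ, d ∈ ℕ₀, let ω_0, …, ω_d : ℝ → ℂ be 1-periodic analytic functions with ω_d not identically zero, and let p_0, …, p_d be polynomials with deg(p_k) = k. If the function g(t) = e^{λt} Σ_{k=0}^d p_k(t)·ω_k(t) belongs to V_φ, then the sequences { φ̂^{(k)}(−iλ/(2π) + ℓ) : ℓ ∈ ℤ }, k = 0, …, d, decay exponentially: there exist C > 0 and q ∈ (0,1) such that |φ̂^{(k)}(−iλ/(2π) + ℓ)| ≤ C·q^{|ℓ|} for all ℓ ∈ ℤ and all k = 0, …, d. -/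
open MeasureTheory

/-- The Fourier transform of `φ`, analytically extended to `ℂ`:
`φ̂(z) = ∫_ℝ φ(x)·e^{−2πi x z} dx`. -/
noncomputable def fourierExt (φ : ℝ → ℂ) (z : ℂ) : ℂ :=
  ∫ x : ℝ, φ x * Complex.exp (-(2 * (Real.pi : ℂ) * Complex.I * (x : ℂ) * z))

/-!
Put `ψ x = exp (-λ x) φ x`, so that `∑ p_k ω_k = ∑ b_ℓ ψ (· - ℓ)` for some sequence `b`. The forward
difference `Δ` acts on a sum of shifts of `ψ` through the coefficients, and on `p_k ω_k` only
through `p_k`. Linear independence therefore gives `Δ ^ (d + 1) b = 0` and `Δ ^ d b ≠ 0`, so `b` and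
its differences span all polynomial sequences of degree at most `d`, and each series
`∑ ℓ ^ r ψ (t - ℓ)` with `r ≤ d` is analytic in `t`. Expanding `(t - ℓ) ^ k` shows that the
periodization of `x ^ k ψ x` is analytic for `k ≤ d`. The Fourier coefficients of an analytic
periodic function decay exponentially; up to a constant factor, these are the values of the `k`-th
derivative of `φ̂` in question.
-/

section AnalyticBounds

open Filter Topology
open scoped Nat NNReal ENNReal

variable {𝕜 E F : Type*} [NontriviallyNormedField 𝕜] [NormedAddCommGroup E] [NormedSpace 𝕜 E]
  [NormedAddCommGroup F] [NormedSpace 𝕜 F]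

lemma exists_nnnorm_changeOrigin_mul_pow_le (p : FormalMultilinearSeries 𝕜 E F)
    {r r' : ℝ≥0} (hr : (r + r' : ℝ≥0∞) < p.radius) :
    ∃ C : ℝ≥0, ∀ y, ‖y‖₊ ≤ r → ∀ n, ‖p.changeOrigin y n‖₊ * r' ^ n ≤ C := by
  refine ⟨∑' s : Σ k l : ℕ, { s : Finset (Fin (k + l)) // s.card = l },
    ‖p (s.1 + s.2.1)‖₊ * r ^ s.2.1 * r' ^ s.1, fun y hy n ↦ ?_⟩
  have hr_lt : (r : ℝ≥0∞) < p.radius := le_self_add.trans_lt hr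
  have hy_lt : (‖y‖₊ : ℝ≥0∞) < p.radius := (ENNReal.coe_le_coe.2 hy).trans_lt hr_lt
  calc ‖p.changeOrigin y n‖₊ * r' ^ n
      ≤ (∑' s : Σ l : ℕ, { s : Finset (Fin (n + l)) // s.card = l },
          ‖p (n + s.1)‖₊ * ‖y‖₊ ^ s.1) * r' ^ n :=
        mul_le_mul_left (p.nnnorm_changeOrigin_le n hy_lt) _
    _ ≤ (∑' s : Σ l : ℕ, { s : Finset (Fin (n + l)) // s.card = l },
          ‖p (n + s.1)‖₊ * r ^ s.1) * r' ^ n :=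
        mul_le_mul_left ((p.changeOriginSeries_summable_aux₂ hy_lt n).tsum_le_tsum
          (fun s ↦ by gcongr) (p.changeOriginSeries_summable_aux₂ hr_lt n)) _
    _ = ∑' s : Σ l : ℕ, { s : Finset (Fin (n + l)) // s.card = l },
          ‖p (n + s.1)‖₊ * r ^ s.1 * r' ^ n := by rw [NNReal.tsum_mul_right]
    _ ≤ _ := NNReal.tsum_comp_le_tsum_of_inj (p.changeOriginSeries_summable_aux₁ hr)
        (i := Sigma.mk n) sigma_mk_injective

variable [CompleteSpace F] {f : E → F}

lemma norm_iteratedFDeriv_le_factorial_mul_norm {p : FormalMultilinearSeries 𝕜 E F} {x : E}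
    {r : ℝ≥0∞} (hf : HasFPowerSeriesOnBall f p x r) (n : ℕ) :
    ‖iteratedFDeriv 𝕜 n f x‖ ≤ n ! * ‖p n‖ := by
  refine ContinuousMultilinearMap.opNorm_le_bound (by positivity) fun v ↦ ?_
  rw [hf.iteratedFDeriv_eq_sum_of_completeSpace]
  calc ‖∑ σ : Equiv.Perm (Fin n), p n fun i ↦ v (σ i)‖
      ≤ ∑ _σ : Equiv.Perm (Fin n), ‖p n‖ * ∏ i, ‖v i‖ := norm_sum_le_of_le _ fun σ _ ↦ by
        simpa only [Equiv.prod_comp σ fun i ↦ ‖v i‖] using (p n).le_opNorm fun i ↦ v (σ i)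
    _ = n ! * ‖p n‖ * ∏ i, ‖v i‖ := by
        rw [Finset.sum_const, Finset.card_univ, Fintype.card_perm, Fintype.card_fin,
          nsmul_eq_mul, mul_assoc]

lemma exists_eventually_norm_iteratedFDeriv_le {x : E} (hf : AnalyticAt 𝕜 f x) :
    ∃ C > (0 : ℝ), ∀ᶠ y in 𝓝 x, ∀ n, ‖iteratedFDeriv 𝕜 n f y‖ ≤ C ^ (n + 1) * n ! := by
  obtain ⟨p, R, hp⟩ := hf
  obtain ⟨ρ, hρ, hρR⟩ := ENNReal.lt_iff_exists_nnreal_btwn.1 hp.r_pos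
  have hr : 0 < ρ / 2 := half_pos (ENNReal.coe_pos.1 hρ)
  have hsum : ((ρ / 2 : ℝ≥0) : ℝ≥0∞) + (ρ / 2 : ℝ≥0) = ρ := by
    rw [← ENNReal.coe_add, add_halves]
  set r := ρ / 2
  obtain ⟨T, hT⟩ := exists_nnnorm_changeOrigin_mul_pow_le p
    (hsum.trans_lt (hρR.trans_le hp.r_le))
  refine ⟨max (T : ℝ) (r : ℝ)⁻¹, by positivity, ?_⟩
  filter_upwards [Metric.closedBall_mem_nhds x hr] with y hy n
  have hyr : ‖y - x‖₊ ≤ r := by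
    rw [Metric.mem_closedBall, dist_eq_norm] at hy
    exact_mod_cast hy
  have hyR : (‖y - x‖₊ : ℝ≥0∞) < R :=
    (ENNReal.coe_le_coe.2 hyr).trans_lt ((le_self_add.trans_eq hsum).trans_lt hρR)
  have hpy : HasFPowerSeriesOnBall f (p.changeOrigin (y - x)) y (R - ‖y - x‖₊) := by
    simpa only [add_sub_cancel] using hp.changeOrigin hyR
  have hcoeff : ‖p.changeOrigin (y - x) n‖ ≤ T * (r : ℝ)⁻¹ ^ n := by
    rw [inv_pow, ← div_eq_mul_inv, le_div_iff₀ (by positivity)]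
    exact_mod_cast hT _ hyr n
  calc ‖iteratedFDeriv 𝕜 n f y‖
      ≤ n ! * (T * (r : ℝ)⁻¹ ^ n) :=
        (norm_iteratedFDeriv_le_factorial_mul_norm hpy n).trans (by gcongr)
    _ ≤ n ! * (max (T : ℝ) (r : ℝ)⁻¹ * max (T : ℝ) (r : ℝ)⁻¹ ^ n) := by
        gcongr
        exacts [le_max_left _ _, le_max_right _ _]
    _ = max (T : ℝ) (r : ℝ)⁻¹ ^ (n + 1) * n ! := by ring

lemma exists_norm_iteratedFDeriv_le_of_isCompact {K : Set E} (hK : IsCompact K)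
    (hf : AnalyticOnNhd 𝕜 f K) :
    ∃ C > (0 : ℝ), ∀ y ∈ K, ∀ n, ‖iteratedFDeriv 𝕜 n f y‖ ≤ C ^ (n + 1) * n ! := by
  refine hK.induction_on
    (p := fun s ↦ ∃ C > (0 : ℝ), ∀ y ∈ s, ∀ n, ‖iteratedFDeriv 𝕜 n f y‖ ≤ C ^ (n + 1) * n !)
    ⟨1, one_pos, by simp⟩ ?_ ?_ fun x hx ↦ ?_
  · rintro s t hst ⟨C, hC, h⟩
    exact ⟨C, hC, fun y hy ↦ h y (hst hy)⟩
  · rintro s t ⟨C, hC, hs⟩ ⟨D, hD, ht⟩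
    refine ⟨max C D, by positivity, ?_⟩
    rintro y (hy | hy) n
    · exact (hs y hy n).trans (by gcongr; exact le_max_left _ _)
    · exact (ht y hy n).trans (by gcongr; exact le_max_right _ _)
  · obtain ⟨C, hC, h⟩ := exists_eventually_norm_iteratedFDeriv_le (hf x hx)
    exact ⟨_, mem_nhdsWithin_of_mem_nhds h, C, hC, fun _ ↦ id⟩

end AnalyticBounds

section ExpDecay

open scoped Nat

/-- Exponential decay in `|ℓ|` of a two-sided sequence. -/
def HasExpDecay {E : Type*} [Norm E] (u : ℤ → E) : Prop :=
  ∃ C > (0 : ℝ), ∃ q ∈ Set.Ioo (0 : ℝ) 1, ∀ ℓ : ℤ, ‖u ℓ‖ ≤ C * q ^ ℓ.natAbs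

lemma HasExpDecay.const_mul {R : Type*} [SeminormedRing R] {u : ℤ → R} (hu : HasExpDecay u)
    (c : R) : HasExpDecay fun ℓ ↦ c * u ℓ := by
  obtain ⟨C, hC, q, hq, h⟩ := hu
  refine ⟨(‖c‖ + 1) * C, by positivity, q, hq, fun ℓ ↦ (norm_mul_le _ _).trans ?_⟩
  rw [mul_assoc]
  exact mul_le_mul (le_add_of_nonneg_right zero_le_one) (h ℓ) (norm_nonneg _) (by positivity)

lemma HasExpDecay.exists_uniform {ι E : Type*} [Norm E] {u : ι → ℤ → E} (s : Finset ι)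
    (hu : ∀ i ∈ s, HasExpDecay (u i)) :
    ∃ C > (0 : ℝ), ∃ q ∈ Set.Ioo (0 : ℝ) 1, ∀ i ∈ s, ∀ ℓ : ℤ, ‖u i ℓ‖ ≤ C * q ^ ℓ.natAbs := by
  induction s using Finset.cons_induction with
  | empty => exact ⟨1, one_pos, 1 / 2, by norm_num, by simp⟩
  | cons i s _ ih =>
    rw [Finset.forall_mem_cons] at hu
    obtain ⟨C, hC, q, hq, hi⟩ := hu.1
    obtain ⟨D, _, r, hr, hs⟩ := ih hu.2
    have hq_pos : 0 < q := hq.1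
    have hr_pos : 0 < r := hr.1
    refine ⟨max C D, by positivity, max q r, ⟨by positivity, max_lt hq.2 hr.2⟩,
      (Finset.forall_mem_cons _ _).2 ⟨fun ℓ ↦ ?_, fun j hj ℓ ↦ ?_⟩⟩
    · exact (hi ℓ).trans (by gcongr <;> exact le_max_left _ _)
    · exact (hs j hj ℓ).trans (by gcongr <;> exact le_max_right _ _)

/- Optimize over `n`: for `n ≈ |m| / (2A)` the hypothesis gives `‖u m‖ ≤ C (A n / |m|)ⁿ ≤ C 2⁻ⁿ`. -/
lemma hasExpDecay_of_abs_pow_mul_norm_le {E : Type*} [SeminormedAddGroup E] {u : ℤ → E} {C A : ℝ}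
    (hC : 0 < C) (hA : 0 < A) (h : ∀ (n : ℕ) (m : ℤ), |(m : ℝ)| ^ n * ‖u m‖ ≤ C * A ^ n * n !) :
    HasExpDecay u := by
  refine ⟨2 * C, by positivity, (1 / 2 : ℝ) ^ (1 / (2 * A)), ⟨by positivity,
    Real.rpow_lt_one (by norm_num) (by norm_num) (by positivity)⟩, fun m ↦ ?_⟩
  set n : ℕ := ⌊|(m : ℝ)| / (2 * A)⌋₊
  have hn_le : A * n ≤ |(m : ℝ)| * (1 / 2) := by
    have hfloor : (n : ℝ) ≤ |(m : ℝ)| / (2 * A) := Nat.floor_le (by positivity)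
    rw [le_div_iff₀ (by positivity)] at hfloor
    linarith
  have hlt_n : |(m : ℝ)| / (2 * A) ≤ n + 1 := (Nat.lt_floor_add_one _).le
  have hpow_pos : 0 < |(m : ℝ)| ^ n := by
    rcases eq_or_ne m 0 with rfl | hm
    · simp [n]
    · positivity
  have hhalf : ‖u m‖ ≤ C * (1 / 2) ^ n := by
    refine le_of_mul_le_mul_left ?_ hpow_pos
    calc |(m : ℝ)| ^ n * ‖u m‖ ≤ C * A ^ n * n ! := h n m
      _ ≤ C * A ^ n * n ^ n := by gcongr; exact_mod_cast Nat.factorial_le_pow n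
      _ = C * (A * n) ^ n := by ring
      _ ≤ C * (|(m : ℝ)| * (1 / 2)) ^ n := by gcongr
      _ = |(m : ℝ)| ^ n * (C * (1 / 2) ^ n) := by ring
  calc ‖u m‖ ≤ 2 * C * (1 / 2 : ℝ) ^ ((n : ℝ) + 1) := by
        rw [Real.rpow_add_one (by norm_num), Real.rpow_natCast]; linarith
    _ ≤ 2 * C * (1 / 2 : ℝ) ^ (|(m : ℝ)| / (2 * A)) := by
        gcongr 2 * C * ?_
        exact Real.rpow_le_rpow_of_exponent_ge (by norm_num) (by norm_num) hlt_n
    _ = 2 * C * ((1 / 2 : ℝ) ^ (1 / (2 * A))) ^ m.natAbs := by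
        rw [← Real.rpow_natCast, ← Real.rpow_mul (by norm_num), Nat.cast_natAbs, Int.cast_abs,
          one_div_mul_eq_div]

end ExpDecay

section FourierCoeff

open Function
open scoped Nat

lemma periodic_iteratedDeriv {𝕜 F : Type*} [NontriviallyNormedField 𝕜] [NormedAddCommGroup F]
    [NormedSpace 𝕜 F] {f : 𝕜 → F} {c : 𝕜} (hf : Periodic f c) (n : ℕ) :
    Periodic (iteratedDeriv n f) c := fun t ↦ by
  rw [← congrFun (iteratedDeriv_comp_add_const n f c) t, hf.funext]

variable {a b : ℝ} (hab : a < b)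

lemma norm_fourierCoeffOn_le {E : Type*} [NormedAddCommGroup E] [NormedSpace ℂ E] {f : ℝ → E}
    {C : ℝ} (hf : ∀ x ∈ Set.Ioc a b, ‖f x‖ ≤ C) (m : ℤ) : ‖fourierCoeffOn hab f m‖ ≤ C := by
  have hba : 0 < b - a := sub_pos.2 hab
  have hint : ‖∫ x in a..b, fourier (-m) (x : AddCircle (b - a)) • f x‖ ≤ C * |b - a| := by
    refine intervalIntegral.norm_integral_le_of_norm_le_const fun x hx ↦ ?_
    rw [norm_smul, fourier_apply, Circle.norm_coe, one_mul]
    exact hf x (Set.uIoc_of_le hab.le ▸ hx)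
  rw [fourierCoeffOn_eq_integral, norm_smul, Real.norm_of_nonneg (by positivity),
    one_div_mul_eq_div, div_le_iff₀ hba]
  rwa [abs_of_pos hba] at hint

lemma fourierCoeffOn_deriv_of_eq {f f' : ℝ → ℂ} (hf : ∀ x ∈ Set.uIcc a b, HasDerivAt f (f' x) x)
    (hf' : IntervalIntegrable f' volume a b) (heq : f a = f b) (m : ℤ) :
    fourierCoeffOn hab f' m = 2 * Real.pi * Complex.I * m / (b - a) * fourierCoeffOn hab f m := by
  rcases eq_or_ne m 0 with rfl | hm
  · simp [fourierCoeffOn_eq_integral, intervalIntegral.integral_eq_sub_of_hasDerivAt hf hf', heq]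
  · have hba : (b - a : ℂ) ≠ 0 := by exact_mod_cast (sub_pos.2 hab).ne'
    rw [fourierCoeffOn_of_hasDerivAt hab hm hf hf', heq]
    have hm' : (m : ℂ) ≠ 0 := by exact_mod_cast hm
    field_simp [Complex.I_ne_zero]
    ring

lemma fourierCoeffOn_iteratedDeriv {f : ℝ → ℂ} {n : ℕ} (hf : ContDiff ℝ n f)
    (hper : Periodic f (b - a)) (m : ℤ) :
    fourierCoeffOn hab (iteratedDeriv n f) m =
      (2 * Real.pi * Complex.I * m / (b - a)) ^ n * fourierCoeffOn hab f m := by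
  induction n with
  | zero => simp
  | succ n ih =>
    have hderiv (x : ℝ) : HasDerivAt (iteratedDeriv n f) (iteratedDeriv (n + 1) f x) x := by
      rw [iteratedDeriv_succ]
      exact (hf.differentiable_iteratedDeriv n (by exact_mod_cast n.lt_succ_self) x).hasDerivAt
    have hcont : Continuous (iteratedDeriv (n + 1) f) := hf.continuous_iteratedDeriv _ le_rfl
    have hends : iteratedDeriv n f a = iteratedDeriv n f b := by
      simpa using (periodic_iteratedDeriv hper n a).symm
    rw [fourierCoeffOn_deriv_of_eq hab (fun x _ ↦ hderiv x) (hcont.intervalIntegrable _ _) hends,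
      ih (hf.of_le (by exact_mod_cast n.le_succ)), pow_succ', ← mul_assoc]

lemma hasExpDecay_fourierCoeffOn {f : ℝ → ℂ} (hf : AnalyticOnNhd ℝ f Set.univ)
    (hper : Periodic f (b - a)) : HasExpDecay (fourierCoeffOn hab f) := by
  have hba : 0 < b - a := sub_pos.2 hab
  obtain ⟨C, hC, hbound⟩ := exists_norm_iteratedFDeriv_le_of_isCompact (isCompact_Icc (a := a)
    (b := b)) (hf.mono (Set.subset_univ _))
  have hcoeff (n : ℕ) (m : ℤ) :
      ‖fourierCoeffOn hab (iteratedDeriv n f) m‖ ≤ C ^ (n + 1) * n ! :=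
    norm_fourierCoeffOn_le hab (fun x hx ↦ by
      rw [← norm_iteratedFDeriv_eq_norm_iteratedDeriv]
      exact hbound x (Set.Ioc_subset_Icc_self hx) n) m
  have hfreq (m : ℤ) : ‖(2 * Real.pi * Complex.I * m / (b - a) : ℂ)‖ =
      2 * Real.pi / (b - a) * |(m : ℝ)| := by
    rw [← Complex.ofReal_sub, norm_div, norm_mul, Complex.norm_real, Real.norm_of_nonneg hba.le,
      Complex.norm_intCast]
    simp [abs_of_pos Real.pi_pos, div_mul_eq_mul_div]
  refine hasExpDecay_of_abs_pow_mul_norm_le (A := (b - a) / (2 * Real.pi) * C) hC (by positivity)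
    fun n m ↦ ?_
  have hcontDiff : ContDiff ℝ n f := (contDiff_omega_iff_analyticOnNhd.2 hf).of_le le_top
  have hderiv := hcoeff n m
  rw [fourierCoeffOn_iteratedDeriv hab hcontDiff hper, norm_mul, norm_pow, hfreq] at hderiv
  calc |(m : ℝ)| ^ n * ‖fourierCoeffOn hab f m‖
      = ((b - a) / (2 * Real.pi)) ^ n *
          ((2 * Real.pi / (b - a) * |(m : ℝ)|) ^ n * ‖fourierCoeffOn hab f m‖) := by
        rw [← mul_assoc, ← mul_pow]
        field_simp
    _ ≤ ((b - a) / (2 * Real.pi)) ^ n * (C ^ (n + 1) * n !) := by gcongr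
    _ = C * ((b - a) / (2 * Real.pi) * C) ^ n * n ! := by rw [mul_pow]; ring

end FourierCoeff

section ForwardDifference

open fwdDiff Function
open scoped Nat

lemma fwdDiff_iter_comp_mul {M N R : Type*} [AddCommMonoid M] [AddCommMonoid N] [Ring R] {h : M}
    {h' : N} {c : M → N} {w : M → R} (hc : ∀ x, c (x + h) = c x + h') (hw : Periodic w h)
    (F : N → R) (n : ℕ) :
    Δ_[h] ^[n] (fun x ↦ F (c x) * w x) = fun x ↦ Δ_[h'] ^[n] F (c x) * w x := by
  induction n generalizing F with
  | zero => rfl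
  | succ n ih =>
    rw [iterate_succ_apply, iterate_succ_apply, ← ih]
    congr 1
    funext x
    simp only [fwdDiff, hc, hw x, sub_mul]

variable {M R : Type*} [AddCommMonoid M] [CommRing R] {h : M} {c w : M → R}

lemma fwdDiff_iter_eval_mul_eq_zero (hc : ∀ x, c (x + h) = c x + 1) (hw : Periodic w h)
    {p : Polynomial R} {n : ℕ} (hp : p.natDegree < n) :
    Δ_[h] ^[n] (fun x ↦ p.eval (c x) * w x) = 0 := by
  rw [fwdDiff_iter_comp_mul hc hw p.eval, Polynomial.fwdDiff_iter_eq_zero_of_degree_lt hp]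
  funext x
  simp

lemma fwdDiff_iter_natDegree_eval_mul (hc : ∀ x, c (x + h) = c x + 1) (hw : Periodic w h)
    (p : Polynomial R) :
    Δ_[h] ^[p.natDegree] (fun x ↦ p.eval (c x) * w x) =
      fun x ↦ p.leadingCoeff * p.natDegree ! * w x := by
  rw [fwdDiff_iter_comp_mul hc hw p.eval, Polynomial.fwdDiff_iter_degree_eq_factorial]
  simp

lemma fwdDiff_iter_sum_eval_mul_eq_zero {ι : Type*} {s : Finset ι} {w : ι → M → R}
    {p : ι → Polynomial R} {n : ℕ} (hc : ∀ x, c (x + h) = c x + 1)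
    (hw : ∀ k ∈ s, Periodic (w k) h) (hp : ∀ k ∈ s, (p k).natDegree < n) :
    Δ_[h] ^[n] (∑ k ∈ s, fun x ↦ (p k).eval (c x) * w k x) = 0 := by
  rw [fwdDiff_iter_finsetSum]
  exact Finset.sum_eq_zero fun k hk ↦ fwdDiff_iter_eval_mul_eq_zero hc (hw k hk) (hp k hk)

lemma apply_eq_apply_zero_of_fwdDiff_eq_zero {G : Type*} [AddCommGroup G] {u : ℤ → G}
    (hu : Δ_[1] u = 0) (n : ℤ) : u n = u 0 := by
  have hper : Periodic u 1 := fun m ↦ sub_eq_zero.1 (congrFun hu m)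
  simpa using hper.int_mul_eq n

lemma exists_fwdDiff_iter_sub_smul_eq_zero {K : Type*} [Field K] {d : ℕ} {b u : ℤ → K}
    (hb_succ : Δ_[1] ^[d + 1] b = 0) (hb_ne : Δ_[1] ^[d] b ≠ 0)
    (hu : Δ_[1] ^[d + 1] u = 0) : ∃ c : K, Δ_[1] ^[d] (u - c • b) = 0 := by
  rw [iterate_succ_apply'] at hb_succ hu
  have hb_const := apply_eq_apply_zero_of_fwdDiff_eq_zero hb_succ
  have hu_const := apply_eq_apply_zero_of_fwdDiff_eq_zero hu
  have hb_zero : Δ_[1] ^[d] b 0 ≠ 0 := fun h0 ↦ hb_ne (funext fun n ↦ (hb_const n).trans h0)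
  refine ⟨Δ_[1] ^[d] u 0 / Δ_[1] ^[d] b 0, funext fun n ↦ ?_⟩
  rw [sub_eq_add_neg, ← neg_smul, fwdDiff_iter_add, fwdDiff_iter_const_smul]
  simp [hb_const n, hu_const n, hb_zero]

/- `Δ b` handles the kernel of `Δ ^ d`, and modulo a multiple of `b` every `u` lies in it. -/
lemma mem_of_fwdDiff_iter_eq_zero {K : Type*} [Field K] {W : Submodule K (ℤ → K)}
    (hW : ∀ b ∈ W, Δ_[1] b ∈ W) {d : ℕ} {b u : ℤ → K} (hb : b ∈ W)
    (hb_succ : Δ_[1] ^[d + 1] b = 0) (hb_ne : Δ_[1] ^[d] b ≠ 0)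
    (hu : Δ_[1] ^[d + 1] u = 0) : u ∈ W := by
  induction d generalizing b u with
  | zero =>
    obtain ⟨c, hc⟩ := exists_fwdDiff_iter_sub_smul_eq_zero hb_succ hb_ne hu
    exact sub_eq_zero.1 hc ▸ W.smul_mem c hb
  | succ d ih =>
    obtain ⟨c, hc⟩ := exists_fwdDiff_iter_sub_smul_eq_zero hb_succ hb_ne hu
    exact (W.sub_mem_iff_left (W.smul_mem c hb)).1 (ih (hW b hb) hb_succ hb_ne hc)

end ForwardDifference

section ShiftSeries

open fwdDiff Function

/-- The function `∑ ℓ, b ℓ * φ (· - ℓ)`, as an element of `V_φ`; for compactly supported `φ` the sum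
is finite at every point. -/
noncomputable def shiftSeries (φ : ℝ → ℂ) (b : ℤ → ℂ) (t : ℝ) : ℂ :=
  ∑' ℓ : ℤ, b ℓ * φ (t - ℓ)

variable {φ : ℝ → ℂ}

lemma summable_shiftSeries (hφ : HasCompactSupport φ) (b : ℤ → ℂ) (t : ℝ) :
    Summable fun ℓ : ℤ ↦ b ℓ * φ (t - ℓ) := by
  refine summable_of_hasFiniteSupport ?_
  have hfin : ((fun ℓ : ℤ ↦ t - ℓ) ⁻¹' tsupport φ).Finite :=
    (((Homeomorph.subLeft t).isClosedEmbedding.comp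
      Int.isClosedEmbedding_coe_real).isCompact_preimage hφ.isCompact).finite_of_discrete
  exact hfin.subset fun ℓ hℓ ↦ subset_tsupport φ (right_ne_zero_of_mul hℓ)

lemma shiftSeries_add (hφ : HasCompactSupport φ) (b c : ℤ → ℂ) :
    shiftSeries φ (b + c) = shiftSeries φ b + shiftSeries φ c := by
  funext t
  simp only [shiftSeries, Pi.add_apply, add_mul]
  exact (summable_shiftSeries hφ b t).tsum_add (summable_shiftSeries hφ c t)

lemma shiftSeries_smul (φ : ℝ → ℂ) (c : ℂ) (b : ℤ → ℂ) :
    shiftSeries φ (c • b) = c • shiftSeries φ b := by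
  funext t
  simp only [shiftSeries, Pi.smul_apply, smul_eq_mul, mul_assoc, tsum_mul_left]

lemma shiftSeries_add_one (φ : ℝ → ℂ) (b : ℤ → ℂ) (t : ℝ) :
    shiftSeries φ b (t + 1) = shiftSeries φ (fun ℓ ↦ b (ℓ + 1)) t := by
  rw [shiftSeries, ← (Equiv.addRight (1 : ℤ)).tsum_eq]
  simp [shiftSeries]

lemma periodic_shiftSeries_one (φ : ℝ → ℂ) : Periodic (shiftSeries φ 1) 1 :=
  shiftSeries_add_one φ 1

lemma fwdDiff_shiftSeries (hφ : HasCompactSupport φ) (b : ℤ → ℂ) :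
    Δ_[1] (shiftSeries φ b) = shiftSeries φ (Δ_[1] b) := by
  funext t
  have hadd := congrFun (shiftSeries_add hφ (Δ_[1] b) b) t
  rw [fwdDiff, shiftSeries_add_one, sub_eq_iff_eq_add, ← Pi.add_apply, ← hadd]
  simp [fwdDiff, shiftSeries]

lemma fwdDiff_iter_shiftSeries (hφ : HasCompactSupport φ) (n : ℕ) (b : ℤ → ℂ) :
    Δ_[1] ^[n] (shiftSeries φ b) = shiftSeries φ (Δ_[1] ^[n] b) :=
  ((show Semiconj (shiftSeries φ) Δ_[1] Δ_[1] from
    fun b ↦ (fwdDiff_shiftSeries hφ b).symm).iterate_right n b).symm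

lemma shiftSeries_exp_mul (φ : ℝ → ℂ) (μ : ℂ) (b : ℤ → ℂ) (t : ℝ) :
    shiftSeries (fun x ↦ Complex.exp (μ * x) * φ x) (fun ℓ ↦ Complex.exp (μ * ℓ) * b ℓ) t =
      Complex.exp (μ * t) * shiftSeries φ b t := by
  rw [shiftSeries, shiftSeries, ← tsum_mul_left]
  refine tsum_congr fun ℓ ↦ ?_
  have hexp : Complex.exp (μ * ℓ) * Complex.exp (μ * (t - ℓ : ℝ)) = Complex.exp (μ * t) := by
    rw [← Complex.exp_add]
    push_cast
    ring_nf
  rw [← hexp]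
  ring

lemma shiftSeries_pow_mul_one (hφ : HasCompactSupport φ) (k : ℕ) (t : ℝ) :
    shiftSeries (fun x ↦ x ^ k * φ x) 1 t =
      ∑ r ∈ Finset.range (k + 1),
        t ^ r * k.choose r * shiftSeries φ (fun ℓ ↦ (-ℓ) ^ (k - r)) t := by
  simp only [shiftSeries, ← tsum_mul_left]
  rw [← Summable.tsum_finsetSum fun r _ ↦ (summable_shiftSeries hφ _ t).mul_left _]
  refine tsum_congr fun ℓ ↦ ?_
  rw [Pi.one_apply, one_mul, Complex.ofReal_sub, sub_eq_add_neg, Complex.ofReal_intCast, add_pow,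
    Finset.sum_mul]
  exact Finset.sum_congr rfl fun r _ ↦ by ring

/-- Linear independence of the integer shifts of `φ`: infinite combinations are allowed, so this is
injectivity of the linear map `b ↦ shiftSeries φ b`. -/
def LinearIndependentShifts (φ : ℝ → ℂ) : Prop :=
  ∀ b : ℤ → ℂ, shiftSeries φ b = 0 → b = 0

lemma LinearIndependentShifts.exp_mul (hφ : LinearIndependentShifts φ) (μ : ℂ) :
    LinearIndependentShifts fun x ↦ Complex.exp (μ * x) * φ x := by
  intro b hb
  obtain ⟨c, rfl⟩ : ∃ c : ℤ → ℂ, (fun ℓ : ℤ ↦ Complex.exp (μ * ℓ) * c ℓ) = b :=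
    ⟨fun ℓ ↦ (Complex.exp (μ * ℓ))⁻¹ * b ℓ,
      funext fun ℓ ↦ mul_inv_cancel_left₀ (Complex.exp_ne_zero _) _⟩
  have hc : c = 0 := hφ c <| funext fun t ↦ by
    simpa [shiftSeries_exp_mul] using congrFun hb t
  funext ℓ
  simp [hc]

/-- The coefficient sequences of the real-analytic members of `V_φ`. This space is closed under
forward differences, which is how it is shown to contain the polynomial sequences. -/
def analyticCoeffs (hφ : HasCompactSupport φ) : Submodule ℂ (ℤ → ℂ) where
  carrier := {b | AnalyticOnNhd ℝ (shiftSeries φ b) Set.univ}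
  add_mem' hb hc := by
    rw [Set.mem_ofPred_eq, shiftSeries_add hφ]
    exact hb.add hc
  zero_mem' := by
    rw [Set.mem_ofPred_eq, funext fun t ↦ show shiftSeries φ 0 t = 0 by simp [shiftSeries]]
    exact analyticOnNhd_const
  smul_mem' c b hb := by
    rw [Set.mem_ofPred_eq, shiftSeries_smul]
    exact hb.const_smul

lemma fwdDiff_mem_analyticCoeffs (hφ : HasCompactSupport φ) {b : ℤ → ℂ}
    (hb : b ∈ analyticCoeffs hφ) : Δ_[1] b ∈ analyticCoeffs hφ := by
  change AnalyticOnNhd ℝ (shiftSeries φ (Δ_[1] b)) Set.univ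
  rw [← fwdDiff_shiftSeries hφ]
  exact (hb.comp (analyticOnNhd_id.add analyticOnNhd_const) (Set.mapsTo_univ _ _)).sub hb

lemma analyticOnNhd_shiftSeries_pow_mul_one (hφ : HasCompactSupport φ)
    (hli : LinearIndependentShifts φ) {b : ℤ → ℂ} {d : ℕ}
    (hb : AnalyticOnNhd ℝ (shiftSeries φ b) Set.univ)
    (hb_succ : Δ_[1] ^[d + 1] (shiftSeries φ b) = 0) (hb_ne : Δ_[1] ^[d] (shiftSeries φ b) ≠ 0)
    {k : ℕ} (hk : k ≤ d) :
    AnalyticOnNhd ℝ (shiftSeries (fun x ↦ x ^ k * φ x) 1) Set.univ := by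
  rw [fwdDiff_iter_shiftSeries hφ] at hb_succ hb_ne
  have hpow {r : ℕ} (hr : r ≤ d) : (fun ℓ : ℤ ↦ (-ℓ : ℂ) ^ r) ∈ analyticCoeffs hφ := by
    refine mem_of_fwdDiff_iter_eq_zero (fun _ ↦ fwdDiff_mem_analyticCoeffs hφ) hb
      (hli _ hb_succ) (fun h ↦ hb_ne ?_) ?_
    · rw [h]
      funext t
      simp [shiftSeries]
    · have hdeg : ((-Polynomial.X) ^ r : Polynomial ℂ).natDegree < d + 1 := by
        simp [Nat.lt_succ_of_le hr]
      simpa using fwdDiff_iter_eval_mul_eq_zero (h := (1 : ℤ)) (c := ((↑) : ℤ → ℂ)) (w := 1)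
        (by simp) (fun _ ↦ rfl) hdeg
  rw [funext fun t ↦ shiftSeries_pow_mul_one hφ k t]
  refine Finset.analyticOnNhd_fun_sum _ fun r _ ↦ ?_
  have hmonomial : AnalyticOnNhd ℝ (fun t : ℝ ↦ (t : ℂ) ^ r * k.choose r) Set.univ :=
    ((Complex.ofRealCLM.analyticOnNhd _).pow r).mul analyticOnNhd_const
  exact hmonomial.mul (hpow ((k.sub_le r).trans hk))

lemma analyticOnNhd_shiftSeries_pow_mul_one_of_eq_sum (hφ : HasCompactSupport φ)
    (hli : LinearIndependentShifts φ) {b : ℤ → ℂ} {d : ℕ} {ω : ℕ → ℝ → ℂ} {p : ℕ → Polynomial ℂ}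
    (hb : shiftSeries φ b = ∑ k ∈ Finset.range (d + 1), fun t : ℝ ↦ (p k).eval (t : ℂ) * ω k t)
    (hper : ∀ k ≤ d, Periodic (ω k) 1) (hana : ∀ k ≤ d, AnalyticOnNhd ℝ (ω k) Set.univ)
    (hω : ω d ≠ 0) (hdeg_lt : ∀ k < d, (p k).natDegree < d) (hdeg : (p d).degree = d)
    {k : ℕ} (hk : k ≤ d) :
    AnalyticOnNhd ℝ (shiftSeries (fun x ↦ x ^ k * φ x) 1) Set.univ := by
  have hcast (x : ℝ) : ((x + 1 : ℝ) : ℂ) = x + 1 := by push_cast; rfl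
  have hnatDegree : (p d).natDegree = d := Polynomial.natDegree_eq_of_degree_eq_some hdeg
  have hp : p d ≠ 0 := fun h ↦ by simp [h] at hdeg
  refine analyticOnNhd_shiftSeries_pow_mul_one hφ hli (b := b) ?_ ?_ ?_ hk <;> rw [hb]
  · exact Finset.analyticOnNhd_sum _ fun k hk ↦
      ((Complex.ofRealCLM.analyticOnNhd _).aeval_polynomial (p k)).mul
        (hana k (Finset.mem_range_succ_iff.1 hk))
  · refine fwdDiff_iter_sum_eval_mul_eq_zero hcast
      (fun k hk ↦ hper k (Finset.mem_range_succ_iff.1 hk)) fun k hk ↦ Nat.lt_succ_iff.2 ?_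
    rcases (Finset.mem_range_succ_iff.1 hk).lt_or_eq with hlt | rfl
    exacts [(hdeg_lt k hlt).le, hnatDegree.le]
  · have htop := fwdDiff_iter_natDegree_eval_mul hcast (hper d le_rfl) (p d)
    rw [hnatDegree] at htop
    rw [Finset.sum_range_succ, fwdDiff_iter_add, fwdDiff_iter_sum_eval_mul_eq_zero hcast
      (fun k hk ↦ hper k (Finset.mem_range.1 hk).le) fun k hk ↦ hdeg_lt k (Finset.mem_range.1 hk),
      zero_add, htop]
    obtain ⟨t, ht⟩ := Function.ne_iff.1 hω
    refine Function.ne_iff.2 ⟨t, mul_ne_zero (mul_ne_zero ?_ ?_) ht⟩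
    exacts [Polynomial.leadingCoeff_ne_zero.2 hp, by exact_mod_cast d.factorial_ne_zero]

end ShiftSeries

section FourierExt

variable {φ : ℝ → ℂ}

lemma integrable_continuous_mul_of_hasCompactSupport {X R : Type*} [TopologicalSpace X] [T2Space X]
    [MeasurableSpace X] [OpensMeasurableSpace X] {μ : Measure X} [NormedRing R]
    [SecondCountableTopologyEither X R] {f g : X → R} (hf : Continuous f)
    (hg : Integrable g μ) (hsupp : HasCompactSupport g) : Integrable (fun x ↦ f x * g x) μ := by
  refine (integrableOn_iff_integrable_of_support_subset
    ((Function.support_mul_subset_right f g).trans (subset_tsupport g))).1 ?_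
  exact hg.integrableOn.continuousOn_mul hf.continuousOn hsupp.isCompact

lemma fourierExt_add (φ : ℝ → ℂ) (z w : ℂ) :
    fourierExt φ (z + w) =
      fourierExt (fun x ↦ Complex.exp (-(2 * Real.pi * Complex.I * z) * x) * φ x) w := by
  refine integral_congr_ae (.of_forall fun x ↦ ?_)
  simp only [mul_add, neg_add, Complex.exp_add]
  ring_nf

lemma hasDerivAt_fourierExt (hφ : Integrable φ) (hsupp : HasCompactSupport φ) (z : ℂ) :
    HasDerivAt (fourierExt φ) (-(2 * Real.pi * Complex.I) * fourierExt (fun x ↦ x * φ x) z) z := by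
  set c : ℝ → ℂ := fun x ↦ 2 * Real.pi * Complex.I * x
  have hc_cont : Continuous c := by fun_prop
  have hderiv (x : ℝ) (w : ℂ) : HasDerivAt (fun w ↦ φ x * Complex.exp (-(c x * w)))
      (φ x * (-c x * Complex.exp (-(c x * w)))) w := by
    simpa only [mul_one, mul_comm (Complex.exp _)] using
      ((((hasDerivAt_id' w).const_mul (c x)).fun_neg).cexp).const_mul (φ x)
  have hbound (x : ℝ) (w : ℂ) (hw : w ∈ Metric.ball z 1) :
      ‖φ x * (-c x * Complex.exp (-(c x * w)))‖ ≤
        ‖φ x * (c x * Real.exp (‖c x‖ * (‖z‖ + 1)))‖ := by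
    have hw_le : ‖w‖ ≤ ‖z‖ + 1 := (norm_lt_of_mem_ball hw).le
    have hexp : ‖Complex.exp (-(c x * w))‖ ≤ Real.exp (‖c x‖ * (‖z‖ + 1)) := by
      refine (Complex.norm_exp_le_exp_norm _).trans ?_
      rw [norm_neg, norm_mul]
      gcongr
    simpa only [norm_mul, norm_neg, Complex.norm_real, Real.norm_of_nonneg (Real.exp_pos _).le]
      using by gcongr
  have hint {g : ℝ → ℂ} (hg : Continuous g) : Integrable fun x ↦ φ x * g x := by
    simpa only [mul_comm] using integrable_continuous_mul_of_hasCompactSupport hg hφ hsupp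
  have hkey : HasDerivAt (fourierExt φ) (∫ x, φ x * (-c x * Complex.exp (-(c x * z)))) z :=
    (hasDerivAt_integral_of_dominated_loc_of_deriv_le (Metric.ball_mem_nhds z one_pos)
      (.of_forall fun w ↦ hφ.1.mul (by fun_prop)) (hint (by fun_prop))
      (hint (by fun_prop)).1 (.of_forall hbound) (hint (by fun_prop)).norm
      (.of_forall fun x w _ ↦ hderiv x w)).2
  refine hkey.congr_deriv ?_
  rw [fourierExt, ← integral_const_mul]
  refine integral_congr_ae (.of_forall fun x ↦ ?_)
  simp only [c]
  ring

lemma iteratedDeriv_fourierExt (hφ : Integrable φ) (hsupp : HasCompactSupport φ) (k : ℕ) :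
    iteratedDeriv k (fourierExt φ) =
      fun z ↦ (-(2 * Real.pi * Complex.I)) ^ k * fourierExt (fun x ↦ x ^ k * φ x) z := by
  induction k with
  | zero => simp
  | succ k ih =>
    funext z
    have hint : Integrable fun x : ℝ ↦ (x : ℂ) ^ k * φ x :=
      integrable_continuous_mul_of_hasCompactSupport (by fun_prop) hφ hsupp
    rw [iteratedDeriv_succ, ih,
      ((hasDerivAt_fourierExt hint hsupp.mul_left z).const_mul _).deriv]
    simp only [pow_succ, mul_assoc, mul_left_comm]

lemma fourierCoeffOn_shiftSeries_one (hφ : Integrable φ) (m : ℤ) :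
    fourierCoeffOn zero_lt_one (shiftSeries φ 1) m = fourierExt φ m := by
  set G : ℝ → ℂ := fun x ↦ φ x * Complex.exp (-(2 * Real.pi * Complex.I * x * m)) with hG
  have hexp (x : ℝ) : Complex.exp (-(2 * Real.pi * Complex.I * x * m)) =
      fourier (-m) (x : AddCircle (1 - 0 : ℝ)) := by
    rw [fourier_coe_apply]
    push_cast
    ring_nf
  have hG_int : Integrable G := by
    refine hφ.mul_bdd (c := 1) (by fun_prop) (.of_forall fun x ↦ ?_)
    rw [hexp, fourier_apply, Circle.norm_coe]
  have hG_add (x : ℝ) (n : ℤ) :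
      G (x + n) = fourier (-m) (x : AddCircle (1 - 0 : ℝ)) * φ (x + n) := by
    have hn : ((n : ℝ) : AddCircle (1 - 0 : ℝ)) = 0 :=
      AddCircle.coe_eq_zero_iff _ |>.2 ⟨n, by simp⟩
    simp only [hG]
    rw [hexp, AddCircle.coe_add, hn, add_zero, mul_comm]
  have hsum : HasSum (fun n : ℤ ↦ ∫ x in Set.Ioc (0 : ℝ) 1, G (x + n))
      (∫ x in Set.Ioc (0 : ℝ) 1, ∑' n : ℤ, G (x + n)) := by
    refine hasSum_integral_of_summable_integral_norm (fun n ↦ ?_) ?_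
    · exact (hG_int.comp_add_right _).integrableOn
    · simpa only [intervalIntegral.integral_of_le zero_le_one] using
        hG_int.norm.hasSum_intervalIntegral_comp_add_int.summable
  have hperiodize : ∫ x in Set.Ioc (0 : ℝ) 1, ∑' n : ℤ, G (x + n) = ∫ x, G x := by
    refine hsum.unique ?_
    simpa only [intervalIntegral.integral_of_le zero_le_one] using
      hG_int.hasSum_intervalIntegral_comp_add_int
  rw [fourierExt, ← hperiodize, fourierCoeffOn_eq_integral, sub_zero, div_one, one_smul,
    intervalIntegral.integral_of_le zero_le_one]
  refine integral_congr_ae (.of_forall fun x ↦ ?_)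
  simp only [hG_add, tsum_mul_left, shiftSeries, smul_eq_mul, Pi.one_apply, one_mul]
  rw [← (Equiv.neg ℤ).tsum_eq]
  simp

lemma hasExpDecay_iteratedDeriv_fourierExt (hφ : Integrable φ) (hsupp : HasCompactSupport φ)
    {k : ℕ} {z : ℂ}
    (hana : AnalyticOnNhd ℝ (shiftSeries
      (fun x ↦ x ^ k * (Complex.exp (-(2 * Real.pi * Complex.I * z) * x) * φ x)) 1) Set.univ) :
    HasExpDecay fun ℓ : ℤ ↦ iteratedDeriv k (fourierExt φ) (z + ℓ) := by
  have hint : Integrable fun x : ℝ ↦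
      (x : ℂ) ^ k * (Complex.exp (-(2 * Real.pi * Complex.I * z) * x) * φ x) := by
    simpa only [mul_assoc] using integrable_continuous_mul_of_hasCompactSupport
      (f := fun x : ℝ ↦ (x : ℂ) ^ k * Complex.exp (-(2 * Real.pi * Complex.I * z) * x))
      (by fun_prop) hφ hsupp
  have hper : Function.Periodic (shiftSeries
      (fun x ↦ x ^ k * (Complex.exp (-(2 * Real.pi * Complex.I * z) * x) * φ x)) 1) (1 - 0) := by
    rw [sub_zero]
    exact periodic_shiftSeries_one _
  have hvalues : (fun ℓ : ℤ ↦ iteratedDeriv k (fourierExt φ) (z + ℓ)) =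
      fun ℓ ↦ (-(2 * Real.pi * Complex.I)) ^ k * fourierCoeffOn zero_lt_one (shiftSeries
        (fun x ↦ x ^ k * (Complex.exp (-(2 * Real.pi * Complex.I * z) * x) * φ x)) 1) ℓ := by
    funext ℓ
    rw [iteratedDeriv_fourierExt hφ hsupp, fourierCoeffOn_shiftSeries_one hint]
    simp only [fourierExt_add, mul_left_comm]
  exact hvalues ▸ (hasExpDecay_fourierCoeffOn zero_lt_one hana hper).const_mul _

end FourierExt

theorem stmt_10_general (φ : ℝ → ℂ) (hint : Integrable φ) (hsupp : HasCompactSupport φ)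
    (hli : ∀ a : ℤ → ℂ, (∀ t : ℝ, ∑' ℓ : ℤ, a ℓ * φ (t - (ℓ : ℝ)) = 0) → ∀ ℓ, a ℓ = 0)
    (lam : ℂ) (d : ℕ) (ω : ℕ → ℝ → ℂ) (hper : ∀ k ≤ d, ∀ t : ℝ, ω k (t + 1) = ω k t)
    (hana : ∀ k ≤ d, ∀ x : ℝ, AnalyticAt ℝ (ω k) x) (hωd : ∃ t : ℝ, ω d t ≠ 0)
    (p : ℕ → Polynomial ℂ) (hdeg_lt : ∀ k < d, (p k).natDegree < d) (hdeg : (p d).degree = d)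
    (a : ℤ → ℂ)
    (hg : ∀ t : ℝ,
      Complex.exp (lam * (t : ℂ)) * ∑ k ∈ Finset.range (d + 1), (p k).eval (t : ℂ) * ω k t
        = ∑' ℓ : ℤ, a ℓ * φ (t - (ℓ : ℝ))) :
    ∃ C > (0 : ℝ), ∃ q ∈ Set.Ioo (0 : ℝ) 1, ∀ k ≤ d, ∀ ℓ : ℤ,
      ‖iteratedDeriv k (fourierExt φ)
          (-(Complex.I * lam) / (2 * (Real.pi : ℂ)) + (ℓ : ℂ))‖ ≤ C * q ^ ℓ.natAbs := by
  set z : ℂ := -(Complex.I * lam) / (2 * Real.pi) with hz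
  set μ : ℂ := -(2 * Real.pi * Complex.I * z) with hμ
  have hμ_lam : μ = -lam := by
    rw [hμ, hz]
    field_simp [Complex.ofReal_ne_zero.2 Real.pi_ne_zero]
    simp
  have hseries : shiftSeries (fun x ↦ Complex.exp (μ * x) * φ x)
      (fun ℓ ↦ Complex.exp (μ * ℓ) * a ℓ) =
      ∑ k ∈ Finset.range (d + 1), fun t : ℝ ↦ (p k).eval (t : ℂ) * ω k t := by
    funext t
    rw [shiftSeries_exp_mul, shiftSeries, ← hg, ← mul_assoc, ← Complex.exp_add, hμ_lam]
    simp
  have hdecay (k : ℕ) (hk : k ∈ Finset.range (d + 1)) :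
      HasExpDecay fun ℓ : ℤ ↦ iteratedDeriv k (fourierExt φ) (z + ℓ) :=
    hasExpDecay_iteratedDeriv_fourierExt hint hsupp <|
      analyticOnNhd_shiftSeries_pow_mul_one_of_eq_sum hsupp.mul_left
        (LinearIndependentShifts.exp_mul (fun a ha ↦ funext (hli a (congrFun ha))) μ) hseries hper
        (fun k hk x _ ↦ hana k hk x) (Function.ne_iff.2 hωd) hdeg_lt hdeg
        (Finset.mem_range_succ_iff.1 hk)
  simpa only [Finset.mem_range_succ_iff] using HasExpDecay.exists_uniform _ hdecay

/-- If `φ` is continuous, integrable, compactly supported with linearly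
independent integer shifts, and `g(t) = e^{λt} Σ_{k=0}^d p_k(t)·ω_k(t)` (with `ω_k` 1-periodic
analytic, `ω_d ≢ 0`, `deg p_k = k`) belongs to `V_φ`, then the sequences
`{φ̂^{(k)}(−iλ/(2π)+ℓ) : ℓ ∈ ℤ}`, `k = 0,…,d`, decay exponentially. -/
theorem stmt_10 (φ : ℝ → ℂ) (hcont : Continuous φ) (hint : Integrable φ)
    (hsupp : HasCompactSupport φ)
    (hli : ∀ a : ℤ → ℂ, (∀ t : ℝ, ∑' ℓ : ℤ, a ℓ * φ (t - (ℓ : ℝ)) = 0) → ∀ ℓ, a ℓ = 0)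
    (lam : ℂ) (d : ℕ) (ω : ℕ → ℝ → ℂ)
    (hper : ∀ k ≤ d, ∀ t : ℝ, ω k (t + 1) = ω k t)
    (hana : ∀ k ≤ d, ∀ x : ℝ, AnalyticAt ℝ (ω k) x)
    (hωd : ∃ t : ℝ, ω d t ≠ 0)
    (p : ℕ → Polynomial ℂ) (hdeg : ∀ k ≤ d, (p k).degree = k)
    (a : ℤ → ℂ)
    (hg : ∀ t : ℝ,
      Complex.exp (lam * (t : ℂ)) * ∑ k ∈ Finset.range (d + 1), (p k).eval (t : ℂ) * ω k t
        = ∑' ℓ : ℤ, a ℓ * φ (t - (ℓ : ℝ))) :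
    ∃ C > (0 : ℝ), ∃ q ∈ Set.Ioo (0 : ℝ) 1, ∀ k ≤ d, ∀ ℓ : ℤ,
      ‖iteratedDeriv k (fourierExt φ)
          (-(Complex.I * lam) / (2 * (Real.pi : ℂ)) + (ℓ : ℂ))‖ ≤ C * q ^ ℓ.natAbs := by
  exact stmt_10_general φ hint hsupp hli lam d ω hper hana hωd p
    (fun k hk ↦ (Polynomial.natDegree_eq_of_degree_eq_some (hdeg k hk.le)).trans_lt hk)
    (hdeg d le_rfl) a hg
end
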